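/- arXiv:1201.2344 — 4 statements merged into one kernel-verified Lean document; each statement's English description precedes it below -/
import Mathlib

section
/- Let 𝒞 and 𝒞' be two distinct connected components of the germ-grain surface ω̄, let T be a hole of 𝒞 and T' a hole of 𝒞'. If T is not contained in T' and T' is not contained in T, then the distance between T and T', i.e. the infimum of |t − t'| over t ∈ T and t' ∈ T', is at least 2·R₀. -/
open Metric Set

/-- The germ-grain surface of a finite configuration: the union of the closed balls. -/
def surface (ω : Finset (EuclideanSpace ℝ (Fin 2) × ℝ)) : Set (EuclideanSpace ℝ (Fin 2)) :=
  ⋃ p ∈ ω, Metric.closedBall p.1 p.2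

/-- `C` is a connected component of `S`. -/
def IsCompOf (C S : Set (EuclideanSpace ℝ (Fin 2))) : Prop :=
  ∃ x ∈ S, C = connectedComponentIn S x

/-- `T` is a hole of `S`: a bounded connected component of the complement of `S`. -/
def IsHoleOf (T S : Set (EuclideanSpace ℝ (Fin 2))) : Prop :=
  (∃ t ∈ Sᶜ, T = connectedComponentIn Sᶜ t) ∧ Bornology.IsBounded T



lemma planar_key : ∀ x y a b c e : ℝ, x^2+y^2=1 → a^2+b^2=1 → c^2+e^2 = 1 → 0 ≤ a → 0 ≤ x → y ≤ b →
      b + e < 0 → 0 ≤ -(c+a)*x + -(e+b)*y → x = 0 ∧ y = -1 := by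
  intro x y a b c e h1 h2 h3 ha hx hy hs h
  have hb1 : b < 1 := by nlinarith [sq_nonneg c]
  rcases eq_or_lt_of_le ha with h0 | h0
  · subst h0
    have hb : b = -1 := by nlinarith
    have : y = -1 := by nlinarith
    subst this
    refine ⟨by nlinarith, rfl⟩
  · have hdot : 0 < 1 + a * c + b * e := by
      have := mul_self_pos.2 hs.ne
      have := sq_nonneg (a+c)
      nlinarith only [h2,h3,this, sq_nonneg (a+c), mul_self_pos.2 hs.ne]
    -- a * (v·u) = x (v·r) + (b x - a y) (-(v_y))
    have hmu : 0 ≤ b * x - a * y := by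
      by_cases hy0 : 0 ≤ y
      · have hb0 : 0 ≤ b := hy0.trans hy
        have : a ≤ x := (sq_le_sq₀ ha hx).1 (by nlinarith [pow_le_pow_left₀ hy0 hy 2])
        nlinarith
      · push Not at hy0
        by_cases hb0 : 0 ≤ b
        · nlinarith [mul_nonneg hb0 hx, mul_nonneg ha (neg_nonneg.2 hy0.le)]
        · push Not at hb0
          have : x ≤ a := (sq_le_sq₀ hx ha).1 (by nlinarith [pow_le_pow_left₀ (neg_nonneg.2 hb0.le) (neg_le_neg hy) 2])
          nlinarith [mul_nonneg ha (sub_nonneg.2 hy), mul_nonneg (sub_nonneg.2 this) (neg_nonneg.2 hb0.le)]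
    have hid : a * (-(c+a)*x + -(e+b)*y) = - x * (1 + a*c+b*e) + (b*x - a*y)*(b+e) := by
      have : a^2 = 1 - b^2 := by linarith
      linear_combination (-x) * h2
    have h4 : 0 ≤ a * (-(c+a)*x + -(e+b)*y) := mul_nonneg ha h
    rw [hid] at h4
    have hx0 : x = 0 := by
      by_contra hx0
      have : 0 < x := lt_of_le_of_ne hx (Ne.symm hx0)
      nlinarith [mul_pos this hdot, mul_nonneg hmu (neg_pos.2 hs).le]
    subst hx0
    refine ⟨rfl, ?_⟩
    have : (y-1)*(y+1)=0 := by linarith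
    rcases mul_eq_zero.1 this with h5 | h5
    · linarith
    · linarith


lemma planarA_aux (U : Finset (ℝ × ℝ)) (hu : ∀ u ∈ U, u.1^2+u.2^2 = 1)
    (hd : ((0:ℝ), (-1:ℝ)) ∈ U)
    (hA : ∀ v : ℝ × ℝ, 0 < v.2 → ∃ u ∈ U, 0 ≤ v.1 * u.1 + v.2 * u.2 ∧ u ≠ (0,-1)) :
    ∃ u1 ∈ U, ∃ u2 ∈ U, u1.1 ≤ 0 ∧ 0 ≤ u2.1 ∧ 0 ≤ u1.2 + u2.2 := by
  obtain ⟨r, hr, hrm⟩ := Finset.exists_max_image (U.filter fun u => 0 ≤ u.1) (fun u => u.2)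
    ⟨_, Finset.mem_filter.2 ⟨hd, le_refl _⟩⟩
  obtain ⟨l, hl, hlm⟩ := Finset.exists_max_image (U.filter fun u => u.1 ≤ 0) (fun u => u.2)
    ⟨_, Finset.mem_filter.2 ⟨hd, le_refl _⟩⟩
  rw [Finset.mem_filter] at hr hl
  refine ⟨l, hl.1, r, hr.1, hl.2, hr.2, ?_⟩
  by_contra hneg
  push Not at hneg
  obtain ⟨u, hU, hv, hne⟩ := hA (-(l.1 + r.1), -(l.2 + r.2)) (by simp only; linarith)
  have e1 := hu _ hr.1
  have e2 := hu _ hl.1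
  have e3 := hu _ hU
  simp only at hv
  apply hne
  rcases le_total 0 u.1 with h | h
  · have := planar_key u.1 u.2 r.1 r.2 l.1 l.2 e3 e1 e2 hr.2 h (hrm u (Finset.mem_filter.2 ⟨hU, h⟩))
      (by linarith) (by linarith)
    exact Prod.ext this.1 this.2
  · have := planar_key (-u.1) u.2 (-l.1) l.2 (-r.1) r.2 (by linarith) (by linarith) (by linarith)
      (by linarith [hl.2]) (by linarith) (hlm u (Finset.mem_filter.2 ⟨hU, h⟩))
      (by linarith) (by linarith)
    exact Prod.ext (by linarith [this.1]) this.2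

lemma planarA (U : Finset (ℝ × ℝ)) (hu : ∀ u ∈ U, u.1^2+u.2^2 = 1)
    (hA : ∀ v : ℝ × ℝ, 0 < v.2 → ∃ u ∈ U, 0 ≤ v.1 * u.1 + v.2 * u.2) :
    ∃ u1 ∈ U, ∃ u2 ∈ U, u1.1 ≤ 0 ∧ 0 ≤ u2.1 ∧ 0 ≤ u1.2 + u2.2 := by
  classical
  have main := planarA_aux (insert (0,-1) U) (by
      intro u h
      rcases Finset.mem_insert.1 h with rfl | h
      · norm_num
      · exact hu u h) (Finset.mem_insert_self _ _) (by
      intro v hv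
      obtain ⟨u, hU, h⟩ := hA v hv
      refine ⟨u, Finset.mem_insert_of_mem hU, h, ?_⟩
      rintro rfl
      simp at h
      linarith)
  obtain ⟨u1, h1, u2, h2, h3, h4, h5⟩ := main
  rcases Finset.mem_insert.1 h1 with r1 | m1 <;> rcases Finset.mem_insert.1 h2 with r2 | m2
  · rw [r1, r2] at h5; norm_num at h5
  · rw [r1] at h5
    simp only at h5
    have := hu _ m2
    have h0 : u2.1 = 0 := by nlinarith
    exact ⟨u2, m2, u2, m2, h0.le, h0.ge, by linarith⟩
  · rw [r2] at h5
    simp only at h5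
    have := hu _ m1
    have h0 : u1.1 = 0 := by nlinarith
    exact ⟨u1, m1, u1, m1, h0.le, h0.ge, by linarith⟩
  · exact ⟨u1, m1, u2, m2, h3, h4, h5⟩

/-- final planar inequality -/
lemma planarB (ux uy wx wy D R : ℝ) (hu : ux^2+uy^2=1) (hw : wx^2+wy^2=1)
    (hs : 0 ≤ ux * wx) (hy : wy ≤ uy) (hD : 0 ≤ D) (hR : 0 < R) (hDR : D ≤ 2 * R) :
    (R*(ux-wx))^2 + (R*(uy-wy)-D)^2 ≤ 4*R^2 := by
  have hN : (ux-wx)^2+(uy-wy)^2 ≤ 2*(uy-wy) := by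
    have : (1-uy)*(1+wy) ≤ ux*wx := by
      have h1 : uy ≤ 1 := by nlinarith
      have h2 : -1 ≤ wy := by nlinarith
      have h3 : wy ≤ 1 := by nlinarith
      have h4 : 0 ≤ (1-uy)*(1+wy) := mul_nonneg (by linarith) (by linarith)
      refine (sq_le_sq₀ h4 hs).1 ?_
      have e : (ux*wx)^2 = ((1-uy)*(1+wy))*((1+uy)*(1-wy)) := by
        have e1 : ux^2 = 1 - uy^2 := by linarith
        have e2 : wx^2 = 1 - wy^2 := by linarith
        rw [mul_pow, e1, e2]; ring
      rw [e, sq]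
      exact mul_le_mul_of_nonneg_left (by linarith) h4
    nlinarith
  have h4 : (ux-wx)^2+(uy-wy)^2 ≤ 4 := by nlinarith [sq_nonneg (ux+wx), sq_nonneg (uy+wy)]
  have h0 : 0 ≤ (ux-wx)^2+(uy-wy)^2 := by positivity
  set N := (ux-wx)^2+(uy-wy)^2 with hNdef
  have : (R*(ux-wx))^2 + (R*(uy-wy)-D)^2 = R^2*N - 2*R*D*(uy-wy) + D^2 := by rw [hNdef]; ring
  rw [this]
  have a1 : R*D*N ≤ R*D*(2*(uy-wy)) := mul_le_mul_of_nonneg_left hN (by positivity)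
  have a2 : R^2*N - R*D*N + D^2 ≤ 4*R^2 := by
    nlinarith [mul_nonneg (sub_nonneg.2 h4) (mul_nonneg (sub_nonneg.2 hDR) (add_nonneg hD (by linarith : 0 ≤ 2*R))), mul_nonneg h0 (mul_nonneg hD (sub_nonneg.2 hDR))]
  linarith

abbrev PE := EuclideanSpace ℝ (Fin 2)

lemma normsq_two (x : PE) : ‖x‖^2 = x 0 ^2 + x 1 ^2 := by
  rw [EuclideanSpace.norm_sq_eq]
  simp [Fin.sum_univ_two]

/-- Pushing a point outwards. -/
lemma push_out (a v : PE) (p : PE × ℝ) 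
    (h : a ∈ closedBall p.1 p.2 → v 0 * (p.1 0 - a 0) + v 1 * (p.1 1 - a 1) < 0) :
    ∀ᶠ q : PE × ℝ in nhds (a, 0), q.1 ∉ closedBall p.1 p.2 → 0 ≤ q.2 →
      q.1 + q.2 • v ∉ closedBall p.1 p.2 := by
  by_cases ha : a ∈ closedBall p.1 p.2
  · have h := h ha
    have hc : Continuous fun q : PE × ℝ => v 0 * (p.1 0 - q.1 0) + v 1 * (p.1 1 - q.1 1) := by
      fun_prop
    have := hc.continuousAt.eventually_lt (continuousAt_const (y := (0:ℝ))) (x₀ := (a, 0)) h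
    filter_upwards [this] with q hq hout hs hin
    apply hout
    rw [mem_closedBall, dist_eq_norm] at hin ⊢
    refine le_trans ?_ hin
    refine (sq_le_sq₀ (norm_nonneg _) (norm_nonneg _)).1 ?_
    rw [normsq_two, normsq_two]
    simp only [PiLp.add_apply, PiLp.sub_apply, PiLp.smul_apply, smul_eq_mul]
    nlinarith [mul_nonneg hs (neg_pos.2 hq).le, sq_nonneg (q.2 * v 0), sq_nonneg (q.2 * v 1)]
  · have hc : Continuous fun q : PE × ℝ => q.1 + q.2 • v := by fun_prop
    have ho : IsOpen (closedBall p.1 p.2)ᶜ := isClosed_closedBall.isOpen_compl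
    have : ∀ᶠ q in nhds ((a, 0) : PE × ℝ), q.1 + q.2 • v ∈ (closedBall p.1 p.2)ᶜ :=
      hc.continuousAt.eventually_mem (ho.mem_nhds (by simpa using ha))
    filter_upwards [this] with q hq _ _ using hq

lemma side_local (ω : Finset (PE × ℝ)) (C T : Set PE)
    (hCb : ∀ x ∈ C, ∃ p ∈ ω, x ∈ closedBall p.1 p.2 ∧ closedBall p.1 p.2 ⊆ C)
    (hTC : ∀ t ∈ T, t ∉ C)
    (hT : ∀ K : Set PE, IsPreconnected K → (∀ x ∈ K, x ∉ C) → (∃ x ∈ K, x ∈ T) → K ⊆ T)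
    (a b : PE) (ha : a ∈ closure T) (hmin : ∀ t ∈ T, dist a b ≤ dist t b)
    (v : PE) (hv : 0 < v 0 * (b 0 - a 0) + v 1 * (b 1 - a 1)) :
    ∃ p ∈ ω, closedBall p.1 p.2 ⊆ C ∧ a ∈ closedBall p.1 p.2 ∧
      0 ≤ v 0 * (p.1 0 - a 0) + v 1 * (p.1 1 - a 1) := by
  by_contra hcon
  push Not at hcon
  have h1 : ∀ᶠ q : PE × ℝ in nhds (a, 0), ∀ p ∈ ω, closedBall p.1 p.2 ⊆ C →
      q.1 ∉ closedBall p.1 p.2 → 0 ≤ q.2 → q.1 + q.2 • v ∉ closedBall p.1 p.2 := by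
    rw [Filter.eventually_all_finset]
    intro p hp
    by_cases hpC : closedBall p.1 p.2 ⊆ C
    · filter_upwards [push_out a v p (fun h => hcon p hp hpC h)] with q hq _ using hq
    · exact Filter.Eventually.of_forall fun q h => absurd h hpC
  obtain ⟨ε, hε, hball⟩ := Metric.eventually_nhds_iff.1 h1
  set g := v 0 * (b 0 - a 0) + v 1 * (b 1 - a 1) with hg
  have hvp : 0 ≤ ‖v‖^2 := sq_nonneg _
  obtain ⟨s, hs, hsε, hsg⟩ : ∃ s : ℝ, 0 < s ∧ s < ε ∧ s * ‖v‖^2 < 2 * g := by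
    refine ⟨min (ε/2) (g / (‖v‖^2+1)), by positivity, ?_, ?_⟩
    · exact (min_le_left _ _).trans_lt (by linarith)
    · have h2 : min (ε/2) (g / (‖v‖^2+1)) * (‖v‖^2+1) ≤ g := by
        rw [← le_div_iff₀ (by positivity)]; exact min_le_right _ _
      have h3 : 0 < min (ε/2) (g / (‖v‖^2+1)) := by positivity
      nlinarith
  have hlt : dist (a + s • v) b < dist a b := by
    rw [dist_eq_norm, dist_eq_norm]
    refine (sq_lt_sq₀ (norm_nonneg _) (norm_nonneg _)).1 ?_
    rw [normsq_two] at *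
    rw [normsq_two]
    simp only [PiLp.add_apply, PiLp.sub_apply, PiLp.smul_apply, smul_eq_mul]
    nlinarith [mul_lt_mul_of_pos_left hsg hs]
  obtain ⟨t, ht, hta⟩ := Metric.mem_closure_iff.1 ha (min ε (dist a b - dist (a + s • v) b))
    (lt_min hε (by linarith))
  have hmem : t + s • v ∈ T := by
    have hK : IsPreconnected ((fun r : ℝ => t + r • v) '' Icc 0 s) :=
      isPreconnected_Icc.image _ (by fun_prop)
    refine hT _ hK ?_ ⟨t, ⟨0, ⟨le_refl _, hs.le⟩, by simp⟩, ht⟩ ⟨s, ⟨hs.le, le_refl _⟩, rfl⟩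
    rintro _ ⟨r, hr, rfl⟩ hC
    obtain ⟨p, hp, hin, hsub⟩ := hCb _ hC
    refine hball (y := (t, r)) ?_ p hp hsub (fun h => hTC t ht (hsub h)) hr.1 hin
    rw [Prod.dist_eq]
    refine max_lt ?_ ?_
    · rw [dist_comm]; exact hta.trans_le (min_le_left _ _)
    · simp only [Real.dist_eq, sub_zero, abs_of_nonneg hr.1]
      exact hr.2.trans_lt hsε
  have h5 := hmin _ hmem
  have h6 : dist (t + s • v) b ≤ dist (t + s • v) (a + s • v) + dist (a + s • v) b :=
    dist_triangle _ _ _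
  rw [dist_add_right, dist_comm t a] at h6
  have := hta.trans_le (min_le_right _ _)
  linarith

lemma side (R₀ : ℝ) (hR₀ : 0 < R₀) (ω : Finset (PE × ℝ)) (hω : ∀ p ∈ ω, R₀ ≤ p.2) (C T : Set PE)
    (hCb : ∀ x ∈ C, ∃ p ∈ ω, x ∈ closedBall p.1 p.2 ∧ closedBall p.1 p.2 ⊆ C)
    (hTC : ∀ t ∈ T, t ∉ C)
    (hT : ∀ K : Set PE, IsPreconnected K → (∀ x ∈ K, x ∉ C) → (∃ x ∈ K, x ∈ T) → K ⊆ T)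
    (a b : PE) (ha : a ∈ closure T) (hmin : ∀ t ∈ T, dist a b ≤ dist t b)
    (e : PE) (D : ℝ) (hD : 0 < D) (he : e 0 ^2 + e 1 ^2 = 1) (hab : b - a = D • e) :
    ∃ u1 u2 : PE, closedBall (a + R₀ • u1) R₀ ⊆ C ∧ closedBall (a + R₀ • u2) R₀ ⊆ C ∧
      u1 0 ^2 + u1 1 ^2 = 1 ∧ u2 0 ^2 + u2 1 ^2 = 1 ∧
      u1 0 * e 1 - u1 1 * e 0 ≤ 0 ∧ 0 ≤ u2 0 * e 1 - u2 1 * e 0 ∧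
      0 ≤ (u1 0 * e 0 + u1 1 * e 1) + (u2 0 * e 0 + u2 1 * e 1) := by
  classical
  let I := ω.filter fun p => closedBall p.1 p.2 ⊆ C ∧ a ∈ closedBall p.1 p.2
  let f : PE × ℝ → PE := fun p => p.2⁻¹ • (p.1 - a)
  let F : PE × ℝ → ℝ × ℝ := fun p =>
    (f p 0 * e 1 - f p 1 * e 0, f p 0 * e 0 + f p 1 * e 1)
  have hunit : ∀ p ∈ I, f p 0 ^2 + f p 1 ^2 = 1 := by
    intro p hp
    obtain ⟨hpω, hpC, hpa⟩ := Finset.mem_filter.1 hp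
    have hpos : 0 < p.2 := hR₀.trans_le (hω p hpω)
    have hnorm : ‖p.1 - a‖ = p.2 := by
      rw [← dist_eq_norm, dist_comm]
      refine le_antisymm hpa ?_
      by_contra hlt
      push Not at hlt
      obtain ⟨t, ht1, ht2⟩ := mem_closure_iff.1 ha (ball p.1 p.2) isOpen_ball hlt
      exact hTC t ht2 (hpC (ball_subset_closedBall ht1))
    rw [← normsq_two, norm_smul, hnorm, norm_inv, Real.norm_of_nonneg hpos.le,
      inv_mul_cancel₀ hpos.ne', one_pow]
  have hballs : ∀ p ∈ I, closedBall (a + R₀ • f p) R₀ ⊆ C := by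
    intro p hp
    obtain ⟨hpω, hpC, hpa⟩ := Finset.mem_filter.1 hp
    have hpos : 0 < p.2 := hR₀.trans_le (hω p hpω)
    refine Subset.trans (closedBall_subset_closedBall' ?_) hpC
    have hfn : ‖f p‖ = 1 := by
      have := hunit p hp
      rw [← normsq_two] at this
      nlinarith [norm_nonneg (f p)]
    have : p.1 = a + p.2 • f p := by
      simp only [f, smul_smul, mul_inv_cancel₀ hpos.ne', one_smul]; abel
    have h2 : dist (a + R₀ • f p) p.1 = p.2 - R₀ := by
      conv_lhs => rw [this]
      rw [dist_add_left, dist_eq_norm, ← sub_smul, norm_smul, hfn, mul_one, Real.norm_eq_abs,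
        abs_sub_comm, abs_of_nonneg (by linarith [hω p hpω])]
    linarith
  have main := planarA (I.image F) (by
    intro u hu
    obtain ⟨p, hp, rfl⟩ := Finset.mem_image.1 hu
    have := hunit p hp
    simp only [F]
    linear_combination (e 0 ^2 + e 1^2) * this + he) (by
    intro v hv
    obtain ⟨p, hp, hpC, hpa, hdot⟩ := side_local ω C T hCb hTC hT a b ha hmin
      (!₂[v.1 * e 1 + v.2 * e 0, - v.1 * e 0 + v.2 * e 1]) (by
        have h0 : b 0 - a 0 = D * e 0 := by
          have := congrArg (fun x : PE => x 0) hab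
          simpa using this
        have h1 : b 1 - a 1 = D * e 1 := by
          have := congrArg (fun x : PE => x 1) hab
          simpa using this
        rw [h0, h1]
        simp
        have : (v.1 * e 1 + v.2 * e 0) * (D * e 0) + (-(v.1 * e 0) + v.2 * e 1) * (D * e 1) = D * v.2 := by
          linear_combination D * v.2 * he
        rw [this]; positivity)
    have hpos : 0 < p.2 := hR₀.trans_le (hω p hp)
    refine ⟨F p, Finset.mem_image_of_mem _ (Finset.mem_filter.2 ⟨hp, hpC, hpa⟩), ?_⟩
    simp only [F, f, PiLp.smul_apply, PiLp.sub_apply, smul_eq_mul]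
    simp at hdot
    have h3 := mul_nonneg (inv_pos.2 hpos).le hdot
    refine h3.trans_eq ?_
    ring)
  obtain ⟨x1, hx1, x2, hx2, i1, i2, i3⟩ := main
  obtain ⟨p, hp, rfl⟩ := Finset.mem_image.1 hx1
  obtain ⟨q, hq, rfl⟩ := Finset.mem_image.1 hx2
  exact ⟨f p, f q, hballs p hp, hballs q hq, hunit p hp, hunit q hq, i1, i2, i3⟩

lemma final_ineq (R₀ : ℝ) (hR₀ : 0 < R₀) (C C' : Set PE) (hdis : Disjoint C C')
    (a b e u w : PE) (D : ℝ) (hD : 0 < D) (hD2 : D ≤ 2 * R₀) (he : e 0 ^2 + e 1 ^2 = 1)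
    (hab : b - a = D • e)
    (hu : closedBall (a + R₀ • u) R₀ ⊆ C) (hw : closedBall (b + R₀ • w) R₀ ⊆ C')
    (hu1 : u 0 ^2 + u 1 ^2 = 1) (hw1 : w 0 ^2 + w 1 ^2 = 1)
    (hx : 0 ≤ (u 0 * e 1 - u 1 * e 0) * (w 0 * e 1 - w 1 * e 0))
    (hy : w 0 * e 0 + w 1 * e 1 ≤ u 0 * e 0 + u 1 * e 1) : False := by
  have h := planarB _ _ _ _ D R₀ (by linear_combination (e 0 ^2 + e 1^2) * hu1 + he)
    (by linear_combination (e 0 ^2 + e 1^2) * hw1 + he) hx hy hD.le hR₀ hD2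
  have h0 : b 0 - a 0 = D * e 0 := by
    have := congrArg (fun x : PE => x 0) hab
    simpa using this
  have h1 : b 1 - a 1 = D * e 1 := by
    have := congrArg (fun x : PE => x 1) hab
    simpa using this
  have hd : dist (a + R₀ • u) (b + R₀ • w) ≤ 2 * R₀ := by
    rw [dist_eq_norm]
    refine (sq_le_sq₀ (norm_nonneg _) (by positivity)).1 ?_
    rw [normsq_two]
    simp only [PiLp.add_apply, PiLp.sub_apply, PiLp.smul_apply, smul_eq_mul]
    have k0 : a 0 + R₀ * u 0 - (b 0 + R₀ * w 0) = R₀ * (u 0 - w 0) - D * e 0 := by linarith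
    have k1 : a 1 + R₀ * u 1 - (b 1 + R₀ * w 1) = R₀ * (u 1 - w 1) - D * e 1 := by linarith
    rw [k0, k1]
    refine le_trans (le_of_eq ?_) (h.trans_eq (by ring))
    linear_combination (D^2 - R₀^2 * ((u 0 - w 0)^2+(u 1 - w 1)^2)) * he
  refine Set.disjoint_left.1 hdis (hu (?_ : midpoint ℝ (a + R₀ • u) (b + R₀ • w) ∈ _)) (hw ?_)
  · rw [mem_closedBall, dist_midpoint_left]
    simp only [Real.norm_ofNat]; linarith
  · rw [mem_closedBall, dist_midpoint_right]
    simp only [Real.norm_ofNat]; linarith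

/-! Topology -/

lemma surface_closed (ω : Finset (PE × ℝ)) : IsClosed (surface ω) := by
  unfold surface
  exact isClosed_biUnion_finset fun p _ => isClosed_closedBall

lemma comp_closed {ω : Finset (PE × ℝ)} {C : Set PE} (h : IsCompOf C (surface ω)) : IsClosed C := by
  obtain ⟨x, hx, rfl⟩ := h
  rw [← closure_subset_iff_isClosed]
  refine isPreconnected_connectedComponentIn.closure.subset_connectedComponentIn
    (subset_closure (mem_connectedComponentIn hx)) ?_
  exact closure_minimal (connectedComponentIn_subset _ _) (surface_closed ω)

lemma comp_absorb {S C : Set PE} (h : ∃ x ∈ S, C = connectedComponentIn S x) {K : Set PE}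
    (hK : IsPreconnected K) (hKS : K ⊆ S) (hm : ∃ x ∈ K, x ∈ C) : K ⊆ C := by
  obtain ⟨x, hx, rfl⟩ := h
  obtain ⟨y, hy, hyC⟩ := hm
  rw [connectedComponentIn_eq hyC]
  exact hK.subset_connectedComponentIn hy hKS

lemma comp_balls {ω : Finset (PE × ℝ)} {C : Set PE} (h : IsCompOf C (surface ω)) :
    ∀ x ∈ C, ∃ p ∈ ω, x ∈ closedBall p.1 p.2 ∧ closedBall p.1 p.2 ⊆ C := by
  intro x hx
  have hxS : x ∈ surface ω := by
    obtain ⟨y, hy, rfl⟩ := h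
    exact connectedComponentIn_subset _ _ hx
  unfold surface at hxS
  simp only [mem_iUnion] at hxS
  obtain ⟨p, hp, hxp⟩ := hxS
  refine ⟨p, hp, hxp, comp_absorb h (convex_closedBall _ _).isPreconnected ?_ ⟨x, hxp, hx⟩⟩
  unfold surface
  exact subset_biUnion_of_mem (u := fun p : PE × ℝ => closedBall p.1 p.2) hp

lemma comp_sub {S C : Set PE} (h : ∃ x ∈ S, C = connectedComponentIn S x) : C ⊆ S := by
  obtain ⟨x, hx, rfl⟩ := h
  exact connectedComponentIn_subset _ _

lemma comp_pre {S C : Set PE} (h : ∃ x ∈ S, C = connectedComponentIn S x) : IsPreconnected C := by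
  obtain ⟨x, hx, rfl⟩ := h
  exact isPreconnected_connectedComponentIn

lemma comp_nonempty {S C : Set PE} (h : ∃ x ∈ S, C = connectedComponentIn S x) : C.Nonempty := by
  obtain ⟨x, hx, rfl⟩ := h
  exact ⟨x, mem_connectedComponentIn hx⟩

lemma comp_disj {S C C' : Set PE} (h : ∃ x ∈ S, C = connectedComponentIn S x)
    (h' : ∃ x ∈ S, C' = connectedComponentIn S x) (hne : C ≠ C') : Disjoint C C' := by
  rw [Set.disjoint_left]
  intro x hx hx'
  exact hne (Subset.antisymm (comp_absorb h' (comp_pre h) (comp_sub h) ⟨x, hx, hx'⟩)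
    (comp_absorb h (comp_pre h') (comp_sub h') ⟨x, hx', hx⟩))

lemma hole_open {C T : Set PE} (hC : IsClosed C) (h : IsHoleOf T C) : IsOpen T := by
  obtain ⟨⟨x, hx, rfl⟩, -⟩ := h
  exact hC.isOpen_compl.connectedComponentIn

lemma hole_closure {C T : Set PE} (hC : IsClosed C) (h : IsHoleOf T C) : closure T ⊆ T ∪ C := by
  intro x hx
  by_cases hxC : x ∈ C
  · exact Or.inr hxC
  left
  have ho : IsOpen (connectedComponentIn Cᶜ x) := hC.isOpen_compl.connectedComponentIn
  obtain ⟨y, hy1, hy2⟩ := mem_closure_iff.1 hx _ ho (mem_connectedComponentIn hxC)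
  exact comp_absorb h.1 isPreconnected_connectedComponentIn (connectedComponentIn_subset _ _)
    ⟨y, hy1, hy2⟩ (mem_connectedComponentIn hxC)

/-- A point of maximal norm on the closure of a bounded set is not in an open subset of it. -/
lemma not_max_of_open {W : Set PE} {x : PE} (ho : IsOpen W) (hx : x ∈ W) :
    ∃ y ∈ W, ‖x‖ < ‖y‖ := by
  obtain ⟨ε, hε, hb⟩ := Metric.isOpen_iff.1 ho x hx
  by_cases h0 : x = 0
  · subst h0
    refine ⟨EuclideanSpace.single 0 (ε/2), hb ?_, ?_⟩
    · rw [mem_ball, dist_zero_right, EuclideanSpace.norm_single, Real.norm_of_nonneg (by positivity)]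
      linarith
    · rw [norm_zero, EuclideanSpace.norm_single, Real.norm_of_nonneg (by positivity)]
      linarith
  · have hn : 0 < ‖x‖ := norm_pos_iff.2 h0
    refine ⟨x + (ε/2/‖x‖) • x, hb ?_, ?_⟩
    · rw [mem_ball, dist_eq_norm, add_sub_cancel_left, norm_smul,
        Real.norm_of_nonneg (by positivity), div_mul_cancel₀ _ hn.ne']
      linarith
    · have : x + (ε/2/‖x‖) • x = (1 + ε/2/‖x‖) • x := by rw [add_smul, one_smul]
      rw [this, norm_smul, Real.norm_of_nonneg (by positivity)]
      have : 0 < ε/2/‖x‖ := by positivity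
      nlinarith

/-- The case of a component lying in the other hole is impossible. -/
lemma nested_case {C C' T T' : Set PE} (hC : IsClosed C) (hC' : IsClosed C')
    (hCp : IsPreconnected C)
    (hdis : Disjoint C C') (hT : IsHoleOf T C) (hT' : IsHoleOf T' C') (hn : ¬ T' ⊆ T)
    (hsub : C' ⊆ T) : False := by
  have hTo := hole_open hC hT
  have hTo' := hole_open hC' hT'
  have hTc : IsCompact (closure T) := hT.2.isCompact_closure
  have hTc' : IsCompact (closure T') := hT'.2.isCompact_closure
  by_cases hm : ∃ x ∈ C, x ∈ T'
  · have hCT' : C ⊆ T' :=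
      comp_absorb hT'.1 hCp (fun x hx hx' => Set.disjoint_left.1 hdis hx hx') hm
    obtain ⟨x, hx, hmax⟩ := (hTc.union hTc').exists_isMaxOn
      ((comp_nonempty hT.1).closure.mono subset_union_left) (f := fun x => ‖x‖)
      continuous_norm.continuousOn
    have hx' : x ∈ T ∪ T' := by
      rcases hx with h | h
      · rcases hole_closure hC hT h with h | h
        · exact Or.inl h
        · exact Or.inr (hCT' h)
      · rcases hole_closure hC' hT' h with h | h
        · exact Or.inr h
        · exact Or.inl (hsub h)
    obtain ⟨y, hy, hlt⟩ := not_max_of_open (hTo.union hTo') hx'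
    have : ‖y‖ ≤ ‖x‖ := hmax (union_subset_union subset_closure subset_closure hy)
    linarith
  · push Not at hm
    apply hn
    refine comp_absorb hT.1 (comp_pre hT'.1) (fun x hx hxC => hm x hxC hx) ?_
    obtain ⟨x, hx, hmax⟩ := hTc'.exists_isMaxOn (comp_nonempty hT'.1).closure (f := fun x => ‖x‖)
      continuous_norm.continuousOn
    have hxT : x ∈ T := by
      rcases hole_closure hC' hT' hx with h | h
      · obtain ⟨y, hy, hlt⟩ := not_max_of_open hTo' h
        have : ‖y‖ ≤ ‖x‖ := hmax (subset_closure hy)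
        linarith
      · exact hsub h
    obtain ⟨y, hy1, hy2⟩ := mem_closure_iff.1 hx T hTo hxT
    exact ⟨y, hy2, hy1⟩

set_option maxHeartbeats 1000000 in
theorem stmt_2 (R₀ R₁ : ℝ) (hR₀ : 0 < R₀) (hR₀₁ : R₀ ≤ R₁)
    (ω : Finset (EuclideanSpace ℝ (Fin 2) × ℝ))
    (hω : ∀ p ∈ ω, p.2 ∈ Set.Icc R₀ R₁)
    (C C' : Set (EuclideanSpace ℝ (Fin 2)))
    (hC : IsCompOf C (surface ω)) (hC' : IsCompOf C' (surface ω)) (hne : C ≠ C')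
    (T T' : Set (EuclideanSpace ℝ (Fin 2)))
    (hT : IsHoleOf T C) (hT' : IsHoleOf T' C')
    (hTT' : ¬ T ⊆ T') (hT'T : ¬ T' ⊆ T) :
    ∀ t ∈ T, ∀ t' ∈ T', 2 * R₀ ≤ dist t t' := by
  have hCc := comp_closed hC
  have hCc' := comp_closed hC'
  have hdis := comp_disj hC hC' hne
  have hd1 : ∀ x ∈ C', x ∉ T := by
    intro x hx hxT
    exact nested_case hCc hCc' (comp_pre hC) hdis hT hT' hT'T
      (comp_absorb hT.1 (comp_pre hC') (fun y hy hy' => Set.disjoint_left.1 hdis hy' hy) ⟨x, hx, hxT⟩)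
  have hd2 : ∀ x ∈ C, x ∉ T' := by
    intro x hx hxT
    exact nested_case hCc' hCc (comp_pre hC') hdis.symm hT' hT hTT'
      (comp_absorb hT'.1 (comp_pre hC) (fun y hy hy' => Set.disjoint_left.1 hdis hy hy') ⟨x, hx, hxT⟩)
  have hd3 : ∀ x ∈ T, x ∉ T' := by
    intro x hx hx'
    exact hTT' (comp_absorb hT'.1 (comp_pre hT.1) (fun y hy hy' => hd1 y hy' hy) ⟨x, hx, hx'⟩)
  intro t ht t' ht'
  have hTc : IsCompact (closure T) := hT.2.isCompact_closure
  have hTc' : IsCompact (closure T') := hT'.2.isCompact_closure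
  obtain ⟨q, hq, hmin⟩ := (hTc.prod hTc').exists_isMinOn
    ⟨(t, t'), subset_closure ht, subset_closure ht'⟩ (f := fun q : PE × PE => dist q.1 q.2)
    continuous_dist.continuousOn
  obtain ⟨a, b⟩ := q
  have ha : a ∈ closure T := hq.1
  have hb : b ∈ closure T' := hq.2
  have hmin' : ∀ x ∈ closure T, ∀ y ∈ closure T', dist a b ≤ dist x y := by
    intro x hx y hy
    have := isMinOn_iff.1 hmin (x, y) (Set.mk_mem_prod hx hy)
    exact this
  refine le_trans ?_ (hmin' t (subset_closure ht) t' (subset_closure ht'))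
  by_contra hlt
  push Not at hlt
  have hab : a ≠ b := by
    rintro rfl
    rcases hole_closure hCc hT ha with h | h <;> rcases hole_closure hCc' hT' hb with h' | h'
    · exact hd3 a h h'
    · exact hd1 a h' h
    · exact hd2 a h h'
    · exact Set.disjoint_left.1 hdis h h'
  have hD : 0 < dist a b := dist_pos.2 hab
  set D := dist a b with hDdef
  have hDn : ‖b - a‖ = D := by rw [hDdef, dist_comm, dist_eq_norm]
  obtain ⟨e, he⟩ : ∃ e : PE, e = D⁻¹ • (b - a) := ⟨_, rfl⟩
  have he1 : e 0 ^2 + e 1 ^2 = 1 := by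
    rw [← normsq_two, he, norm_smul, hDn, norm_inv, Real.norm_of_nonneg hD.le,
      inv_mul_cancel₀ hD.ne', one_pow]
  have hbe : b - a = D • e := by rw [he, smul_smul, mul_inv_cancel₀ hD.ne', one_smul]
  obtain ⟨u1, u2, hu1, hu2, n1, n2, x1, x2, y12⟩ := side R₀ hR₀ ω (fun p hp => (hω p hp).1) C T
    (comp_balls hC) (comp_sub hT.1) (fun K hK h1 h2 => comp_absorb hT.1 hK h1 h2) a b ha
    (fun x hx => hmin' x (subset_closure hx) b hb) e D hD he1 hbe
  obtain ⟨w1, w2, hw1, hw2, m1, m2, z1, z2, z12⟩ := side R₀ hR₀ ω (fun p hp => (hω p hp).1) C' T'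
    (comp_balls hC') (comp_sub hT'.1) (fun K hK h1 h2 => comp_absorb hT'.1 hK h1 h2) b a hb
    (fun x hx => by
      rw [dist_comm b a, dist_comm x a]
      exact hmin' a ha x (subset_closure hx)) (-e) D hD (by simpa using he1)
    (by rw [smul_neg, ← hbe]; abel)
  simp only [PiLp.neg_apply] at z1 z2 z12
  have hfin := fun u w => final_ineq R₀ hR₀ C C' hdis a b e u w D hD hlt.le he1 hbe
  rcases le_total (w2 0 * e 0 + w2 1 * e 1) (u1 0 * e 0 + u1 1 * e 1) with h | h
  · exact hfin u1 w2 hu1 hw2 n1 m2 (mul_nonneg_of_nonpos_of_nonpos x1 (by linarith)) h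
  · exact hfin u2 w1 hu2 hw1 n2 m1 (mul_nonneg x2 (by linarith)) (by linarith)
end

section
/- Let ω be a configuration, let α > 0, and let (x,R) with x ∈ ℝ² and R ∈ [R₀,R₁] be a good couple for ω, meaning that every connected component of ω̄ ∩ B̄(x,R) has two-dimensional Lebesgue measure at least α. Denote by N_hol(S) the number of bounded connected components of ℝ² ∖ S. Then the hole number variation when B̄(x,R) is added to ω̄ satisfies N_hol(ω̄ ∪ B̄(x,R)) − N_hol(ω̄) ≤ π·R₁²/α. -/
open Metric Set MeasureTheory

/-- The number of holes (bounded connected components of the complement) of `S`. -/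
noncomputable def nhol (S : Set (EuclideanSpace ℝ (Fin 2))) : ℕ :=
  {T : Set (EuclideanSpace ℝ (Fin 2)) |
    (∃ t ∈ Sᶜ, T = connectedComponentIn Sᶜ t) ∧ Bornology.IsBounded T}.ncard

abbrev E2 := EuclideanSpace ℝ (Fin 2)

noncomputable def phi : E2 ≃ₗᵢ[ℝ] ℂ := Complex.orthonormalBasisOneI.repr.symm

def HasLog (K : Set E2) (f : E2 → ℂ) : Prop :=
  ∃ L : E2 → ℂ, ContinuousOn L K ∧ ∀ z ∈ K, f z = Complex.exp (L z)

lemma norm_phi_sub (z p : E2) : ‖phi z - phi p‖ = dist z p := by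
  rw [← map_sub, LinearIsometryEquiv.norm_map, dist_eq_norm]

lemma phi_sub_ne {z p : E2} (h : z ≠ p) : phi z - phi p ≠ 0 := by
  rw [sub_ne_zero]; exact fun e => h (phi.injective e)

lemma HasLog.congr {K : Set E2} {f g : E2 → ℂ} (hf : HasLog K f) (h : ∀ z ∈ K, g z = f z) :
    HasLog K g := by
  obtain ⟨L, hL, e⟩ := hf
  exact ⟨L, hL, fun z hz => by rw [h z hz, e z hz]⟩

lemma HasLog.mul {K : Set E2} {f g : E2 → ℂ} (hf : HasLog K f) (hg : HasLog K g) :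
    HasLog K (fun z => f z * g z) := by
  obtain ⟨L, hL, e⟩ := hf
  obtain ⟨M, hM, e'⟩ := hg
  exact ⟨fun z => L z + M z, hL.add hM, fun z hz => by
    simp only [e z hz, e' z hz, Complex.exp_add]⟩

lemma HasLog.inv {K : Set E2} {f : E2 → ℂ} (hf : HasLog K f) :
    HasLog K (fun z => (f z)⁻¹) := by
  obtain ⟨L, hL, e⟩ := hf
  exact ⟨fun z => - L z, hL.neg, fun z hz => by
    simp only [e z hz, Complex.exp_neg]⟩

lemma HasLog.const (K : Set E2) {c : ℂ} (hc : c ≠ 0) : HasLog K (fun _ => c) :=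
  ⟨fun _ => Complex.log c, continuousOn_const, fun _ _ => (Complex.exp_log hc).symm⟩

lemma hasLog_near_one {K : Set E2} {f : E2 → ℂ} (hf : ContinuousOn f K)
    (h : ∀ z ∈ K, ‖f z - 1‖ < 1) : HasLog K f := by
  have hs : ∀ z ∈ K, f z ∈ Complex.slitPlane := fun z hz => by
    have := Complex.mem_slitPlane_of_norm_lt_one (h z hz)
    simpa using this
  exact ⟨fun z => Complex.log (f z), hf.clog hs, fun z hz =>
    (Complex.exp_log (Complex.slitPlane_ne_zero (hs z hz))).symm⟩

lemma continuous_phi_sub (p : E2) : Continuous (fun z => phi z - phi p) :=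
  phi.continuous.sub continuous_const

/-- far away point -/
lemma hasLog_far {K : Set E2} {p a : E2} (h : ∀ z ∈ K, dist z a < dist p a) :
    HasLog K (fun z => phi z - phi p) := by
  by_cases hpa : p = a
  · subst hpa
    refine ⟨fun _ => 0, continuousOn_const, fun z hz => ?_⟩
    have := h z hz
    simp only [dist_self] at this
    exact absurd this (not_lt.mpr dist_nonneg)
  have hne : phi a - phi p ≠ 0 := phi_sub_ne (Ne.symm hpa)
  refine ((HasLog.const K hne).mul (hasLog_near_one
    (f := fun z => (phi z - phi p) / (phi a - phi p)) ?_ ?_)).congr ?_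
  · exact ((continuous_phi_sub p).div_const _).continuousOn
  · intro z hz
    have : (phi z - phi p) / (phi a - phi p) - 1 = (phi z - phi a) / (phi a - phi p) := by
      field_simp; ring
    rw [this, norm_div, norm_phi_sub, norm_phi_sub, dist_comm a p,
      div_lt_one (lt_of_le_of_lt dist_nonneg (h z hz))]
    exact h z hz
  · intro z _; field_simp

lemma hasLog_close {K : Set E2} {p q : E2} (h : ∀ z ∈ K, dist p q < dist z q) :
    HasLog K (fun z => (phi z - phi p) / (phi z - phi q)) := by
  have hne : ∀ z ∈ K, phi z - phi q ≠ 0 := fun z hz => phi_sub_ne (by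
    rintro rfl
    have := h z hz
    rw [dist_self] at this
    exact absurd this (not_lt.mpr dist_nonneg))
  apply hasLog_near_one
  · exact (continuous_phi_sub p).continuousOn.div (continuous_phi_sub q).continuousOn hne
  · intro z hz
    have h1 := hne z hz
    have : (phi z - phi p) / (phi z - phi q) - 1 = (phi q - phi p) / (phi z - phi q) := by
      field_simp; ring
    rw [this, norm_div, norm_phi_sub, norm_phi_sub, dist_comm q p,
      div_lt_one (lt_of_le_of_lt dist_nonneg (h z hz))]
    exact h z hz

/-- two points in a connected subset of the complement -/
lemma hasLog_conn {K V : Set E2} (hK : IsClosed K) (hV : IsPreconnected V) (hVK : V ⊆ Kᶜ)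
    {p q : E2} (hp : p ∈ V) (hq : q ∈ V) :
    HasLog K (fun z => (phi z - phi p) / (phi z - phi q)) := by
  have hne : ∀ a ∈ V, ∀ z ∈ K, phi z - phi a ≠ 0 := fun a ha z hz => phi_sub_ne (by
    rintro rfl; exact hVK ha hz)
  have nb : ∀ a ∈ V, ∃ d > 0, ∀ z ∈ K, d ≤ dist z a := by
    intro a ha
    obtain ⟨d, hd, h⟩ := Metric.isOpen_iff.1 hK.isOpen_compl a (hVK ha)
    refine ⟨d, hd, fun z hz => ?_⟩
    by_contra hc
    exact h (mem_ball.2 (not_le.1 hc)) hz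
  let P : E2 → Prop := fun a => HasLog K (fun z => (phi z - phi a) / (phi z - phi q))
  have step : ∀ a ∈ V, ∀ b ∈ V, HasLog K (fun z => (phi z - phi a) / (phi z - phi b)) → P b → P a := by
    intro a _ b hb h1 h2
    refine (h1.mul h2).congr fun z hz => ?_
    have := hne b hb z hz
    field_simp
  have step' : ∀ a ∈ V, ∀ b ∈ V, HasLog K (fun z => (phi z - phi a) / (phi z - phi b)) → P a → P b := by
    intro a ha b hb h1 h2
    refine step b hb a ha (h1.inv.congr fun z hz => ?_) h2
    rw [inv_div]
  have key := hV.induction₂ (fun a b => P a ↔ P b) ?_ ?_ ?_ hp hq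
  · refine key.2 ((HasLog.const K one_ne_zero).congr fun z hz => ?_)
    exact div_self (hne q hq z hz)
  · intro a ha
    obtain ⟨d, hd, h⟩ := nb a ha
    filter_upwards [self_mem_nhdsWithin, mem_nhdsWithin_of_mem_nhds (ball_mem_nhds a hd)] with b hb hb'
    have := hasLog_close (K := K) (p := b) (q := a) (fun z hz => lt_of_lt_of_le hb' (h z hz))
    exact ⟨step b hb a ha this, step' b hb a ha this⟩
  · intro a b c _ _ _ h1 h2; exact h1.trans h2
  · intro a b _ _ h; exact h.symm

lemma const_of_exp_one {X : Type*} [TopologicalSpace X] {K : Set X} (hK : IsPreconnected K)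
    {D : X → ℂ} (hD : ContinuousOn D K) (h : ∀ z ∈ K, Complex.exp (D z) = 1) {a b : X}
    (ha : a ∈ K) (hb : b ∈ K) : D a = D b := by
  have hπ : (2 * Real.pi * Complex.I) ≠ 0 := Complex.two_pi_I_ne_zero
  have h1 : ∀ z ∈ K, ∃ n : ℤ, D z = n * (2 * Real.pi * Complex.I) := fun z hz =>
    Complex.exp_eq_one_iff.1 (h z hz)
  have hd : IsDiscrete (Set.range ((↑) : ℤ → ℝ)) := by
    exact Int.isClosedEmbedding_coe_real.isEmbedding.isDiscrete_range
  have := hK.constant_of_mapsTo (S := K) (T := Set.range ((↑) : ℤ → ℝ))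
    (f := fun z => (D z / (2 * Real.pi * Complex.I)).re) hd
    (Complex.continuous_re.comp_continuousOn (hD.div_const _)) ?_ ha hb
  · obtain ⟨n, hn⟩ := h1 a ha
    obtain ⟨m, hm⟩ := h1 b hb
    simp only [hn, hm] at this ⊢
    rw [mul_div_cancel_right₀ _ hπ, mul_div_cancel_right₀ _ hπ] at this
    simp at this
    rw [this]
  · intro z hz
    obtain ⟨n, hn⟩ := h1 z hz
    refine ⟨n, ?_⟩
    simp only [hn]
    rw [mul_div_cancel_right₀ _ hπ]
    simp

lemma hasLog_disc {p : E2} {r : ℝ} {h : E2 → ℂ} (hc : Continuous h) (hne : ∀ z, h z ≠ 0) :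
    HasLog (closedBall p r) h := by
  have hcomp : IsCompact (closedBall p r) := isCompact_closedBall p r
  rcases lt_or_ge r 0 with hr | hr
  · refine ⟨fun _ => 0, continuousOn_const, fun z hz => ?_⟩
    rw [closedBall_eq_empty.2 hr] at hz
    exact absurd hz (notMem_empty z)
  obtain ⟨z0, -, hz0⟩ := hcomp.exists_isMinOn ⟨p, mem_closedBall_self hr⟩ hc.norm.continuousOn
  have hm : 0 < ‖h z0‖ := norm_pos_iff.2 (hne z0)
  have huc := hcomp.uniformContinuousOn_of_continuous hc.continuousOn
  obtain ⟨δ, hδ, H⟩ := Metric.uniformContinuousOn_iff.1 huc _ hm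
  obtain ⟨n, hn⟩ := exists_nat_gt (r / δ)
  have hn0 : (0 : ℝ) < n := lt_of_le_of_lt (by positivity) hn
  let s : ℕ → E2 → E2 := fun k z => p + ((k : ℝ) / n) • (z - p)
  have hsc : ∀ k, Continuous (s k) := fun k => by fun_prop
  have hsm : ∀ k ≤ n, ∀ z ∈ closedBall p r, s k z ∈ closedBall p r := by
    intro k hk z hz
    rw [mem_closedBall, dist_eq_norm] at *
    simp only [s, add_sub_cancel_left, norm_smul]
    have : ‖(k : ℝ) / n‖ ≤ 1 := by
      rw [Real.norm_of_nonneg (by positivity), div_le_one hn0]; exact_mod_cast hk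
    calc _ ≤ 1 * r := by gcongr
      _ = r := one_mul r
  have key : ∀ k ≤ n, HasLog (closedBall p r) (fun z => h (s k z)) := by
    intro k
    induction k with
    | zero =>
      intro _
      refine (HasLog.const _ (hne p)).congr fun z _ => ?_
      simp [s]
    | succ k ih =>
      intro hk
      have h1 := ih (by omega)
      have h2 : HasLog (closedBall p r) (fun z => h (s (k+1) z) / h (s k z)) := by
        apply hasLog_near_one
        · exact ((hc.comp (hsc _)).div (hc.comp (hsc _)) (fun z => hne _)).continuousOn
        · intro z hz
          have e : h (s (k+1) z) / h (s k z) - 1 = (h (s (k+1) z) - h (s k z)) / h (s k z) := by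
            have := hne (s k z)
            field_simp
          have hmin : ‖h z0‖ ≤ ‖h (s k z)‖ := hz0 (hsm k (by omega) z hz)
          rw [e, norm_div, div_lt_one (norm_pos_iff.2 (hne _)), ← dist_eq_norm]
          refine lt_of_lt_of_le (H _ (hsm _ hk z hz) _ (hsm k (by omega) z hz) ?_) hmin
          rw [dist_eq_norm]
          have : s (k+1) z - s k z = (1 / (n : ℝ)) • (z - p) := by
            simp only [s, add_sub_add_left_eq_sub, ← sub_smul]
            congr 1
            push_cast; ring
          rw [this, norm_smul, Real.norm_of_nonneg (by positivity)]
          rw [mem_closedBall, dist_eq_norm] at hz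
          rw [div_lt_iff₀ hδ] at hn
          rw [div_mul_eq_mul_div, one_mul, div_lt_iff₀ hn0]
          linarith
      refine (h1.mul h2).congr fun z _ => ?_
      have := hne (s k z)
      field_simp
  refine (key n le_rfl).congr fun z _ => ?_
  simp only [s]
  rw [div_self hn0.ne', one_smul, add_sub_cancel]

lemma no_log_circle {p : E2} {r : ℝ} (hr : 0 < r) {n : ℤ} {f : E2 → ℂ}
    (hf : HasLog (closedBall p r) f)
    (h : ∀ z, dist z p = r → f z = (phi z - phi p) ^ n) : n = 0 := by
  obtain ⟨L, hL, e⟩ := hf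
  let c : ℝ → E2 := fun θ => p + phi.symm (r * Complex.exp (θ * Complex.I))
  have hphi : ∀ θ, phi (c θ) - phi p = r * Complex.exp (θ * Complex.I) := by
    intro θ; simp [c]
  have hd : ∀ θ, dist (c θ) p = r := by
    intro θ
    rw [← norm_phi_sub, hphi, norm_mul, Complex.norm_exp_ofReal_mul_I, mul_one,
      Complex.norm_real, Real.norm_of_nonneg hr.le]
  have hcc : Continuous c := by
    refine continuous_const.add (phi.symm.continuous.comp ?_)
    fun_prop
  have hr' : (r : ℂ) ≠ 0 := by exact_mod_cast hr.ne'
  let D : ℝ → ℂ := fun θ => L (c θ) - n * (θ * Complex.I) - n * Complex.log r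
  have hD : Continuous D := by
    have : Continuous (fun θ => L (c θ)) :=
      hL.comp_continuous hcc (fun θ => mem_closedBall.2 (hd θ).le)
    exact (this.sub (continuous_const.mul
      (Complex.continuous_ofReal.mul continuous_const))).sub continuous_const
  have hD1 : ∀ θ ∈ (univ : Set ℝ), Complex.exp (D θ) = 1 := by
    intro θ _
    simp only [D]
    rw [Complex.exp_sub, Complex.exp_sub, ← e _ (mem_closedBall.2 (hd θ).le), h _ (hd θ), hphi,
      Complex.exp_int_mul, Complex.exp_int_mul, Complex.exp_log hr', mul_zpow]
    have h1 : (r : ℂ) ^ n ≠ 0 := zpow_ne_zero _ hr'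
    have h2 : (Complex.exp (θ * Complex.I)) ^ n ≠ 0 := zpow_ne_zero _ (Complex.exp_ne_zero _)
    field_simp
  have := const_of_exp_one isPreconnected_univ hD.continuousOn hD1 (mem_univ 0)
    (mem_univ (2 * Real.pi))
  have hc2 : c (2 * Real.pi) = c 0 := by
    simp [c, Complex.exp_two_pi_mul_I]
  simp only [D, hc2] at this
  have h3 : (n : ℂ) * (2 * Real.pi * Complex.I) = 0 := by
    push_cast at this
    linear_combination this
  simpa [Complex.two_pi_I_ne_zero] using h3

lemma comp_frontier {K : Set E2} (hK : IsClosed K) (p : E2) :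
    frontier (connectedComponentIn Kᶜ p) ⊆ K := by
  intro z hz
  by_contra hzK
  have ho : IsOpen (connectedComponentIn Kᶜ p) := hK.isOpen_compl.connectedComponentIn
  have ho' : IsOpen (connectedComponentIn Kᶜ z) := hK.isOpen_compl.connectedComponentIn
  have hz' : z ∈ connectedComponentIn Kᶜ z := mem_connectedComponentIn hzK
  obtain ⟨y, hy1, hy2⟩ := mem_closure_iff.1 hz.1 _ ho' hz'
  have : connectedComponentIn Kᶜ z = connectedComponentIn Kᶜ p :=
    (connectedComponentIn_eq hy1).trans (connectedComponentIn_eq hy2).symm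
  rw [this] at hz'
  rw [ho.frontier_eq] at hz
  exact hz.2 hz'

lemma indep {K : Set E2} (hK : IsClosed K) {p : E2} (hp : p ∉ K)
    (hb : Bornology.IsBounded (connectedComponentIn Kᶜ p)) {u : E2 → ℂ}
    (hu : ContinuousOn u (closure (connectedComponentIn Kᶜ p)))
    (hu0 : ∀ z ∈ closure (connectedComponentIn Kᶜ p), u z ≠ 0) {n : ℤ}
    (hlog : HasLog K (fun z => (phi z - phi p) ^ n * u z)) : n = 0 := by
  classical
  set V := connectedComponentIn Kᶜ p with hV
  have ho : IsOpen V := hK.isOpen_compl.connectedComponentIn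
  have hpV : p ∈ V := mem_connectedComponentIn hp
  obtain ⟨g, hg, e⟩ := hlog
  obtain ⟨G, hG⟩ := ContinuousMap.exists_restrict_eq hK ⟨K.domRestrict g, hg.domRestrict⟩
  have hGg : ∀ z ∈ K, G z = g z := fun z hz => by
    have := congrArg (fun f => f ⟨z, hz⟩) hG
    exact this
  obtain ⟨r, hr, hVr⟩ := hb.subset_ball_lt 0 p
  let h : E2 → ℂ := V.piecewise (fun z => Complex.exp (G z) / u z) (fun z => (phi z - phi p) ^ n)
  have hne : ∀ z ∉ V, phi z - phi p ≠ 0 := fun z hz => phi_sub_ne (by rintro rfl; exact hz hpV)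
  have hcont : Continuous h := by
    apply continuous_piecewise
    · intro z hz
      have hzK := comp_frontier hK p hz
      have := hu0 z hz.1
      rw [hGg z hzK, ← e z hzK]
      field_simp
    · exact (Complex.continuous_exp.comp G.continuous).continuousOn.div hu hu0
    · rw [ho.isClosed_compl.closure_eq]
      exact (continuous_phi_sub p).continuousOn.zpow₀ n (fun z hz => Or.inl (hne z hz))
  have hh0 : ∀ z, h z ≠ 0 := by
    intro z
    by_cases hz : z ∈ V
    · simp only [h, piecewise_eq_of_mem _ _ _ hz]
      exact div_ne_zero (Complex.exp_ne_zero _) (hu0 z (subset_closure hz))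
    · simp only [h, piecewise_eq_of_notMem _ _ _ hz]
      exact zpow_ne_zero _ (hne z hz)
  refine no_log_circle hr (hasLog_disc (p := p) (r := r) hcont hh0) fun z hz => ?_
  have hzV : z ∉ V := fun hz' => by
    have := mem_ball.1 (hVr hz'); linarith
  simp only [h, piecewise_eq_of_notMem _ _ _ hzV]

lemma key_count {ι κ γ : Type*} [Fintype ι] [Fintype κ] [Fintype γ] {S : Set E2}
    (hS : IsClosed S) (hSb : Bornology.IsBounded S) {x : E2} {R : ℝ}
    (p : ι → E2) (hp : ∀ i, p i ∉ S ∪ closedBall x R)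
    (hpb : ∀ i, Bornology.IsBounded (connectedComponentIn (S ∪ closedBall x R)ᶜ (p i)))
    (hpi : ∀ i j, i ≠ j → p j ∉ connectedComponentIn (S ∪ closedBall x R)ᶜ (p i))
    (q : κ → E2) (hq : ∀ k, q k ∉ S)
    (hpq : ∀ i, Bornology.IsBounded (connectedComponentIn Sᶜ (p i)) →
      ∃ k, q k ∈ connectedComponentIn Sᶜ (p i))
    (c : γ → E2) (hc : ∀ g, c g ∈ S ∩ closedBall x R)
    (hcov : ∀ z ∈ S ∩ closedBall x R, ∃ g, c g ∈ connectedComponentIn (S ∩ closedBall x R) z) :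
    Fintype.card ι ≤ Fintype.card κ + Fintype.card γ := by
  classical
  have hpS : ∀ i, p i ∉ S := fun i h => hp i (Or.inl h)
  have hpB : ∀ i, p i ∉ closedBall x R := fun i h => hp i (Or.inr h)
  let w : Option κ → E2 → ℂ := fun Q z => Q.elim 1 (fun k => phi z - phi (q k))
  have hw : ∀ Q, ∀ z ∈ S, w Q z ≠ 0 := by
    intro Q z hz
    cases Q with
    | none => exact one_ne_zero
    | some k => exact phi_sub_ne (by rintro rfl; exact hq k hz)
  have stepA : ∀ i, ∃ (Q : Option κ) (L : E2 → ℂ), ContinuousOn L S ∧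
      ∀ z ∈ S, phi z - phi (p i) = Complex.exp (L z) * w Q z := by
    intro i
    have hmem : p i ∈ connectedComponentIn Sᶜ (p i) := mem_connectedComponentIn (hpS i)
    by_cases hbd : Bornology.IsBounded (connectedComponentIn Sᶜ (p i))
    · obtain ⟨k, hk⟩ := hpq i hbd
      obtain ⟨L, hL, e⟩ := hasLog_conn hS isPreconnected_connectedComponentIn
        (connectedComponentIn_subset Sᶜ (p i)) hmem hk
      refine ⟨some k, L, hL, fun z hz => ?_⟩
      have := hw (some k) z hz
      rw [← e z hz]
      simp only [w, Option.elim] at this ⊢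
      field_simp
    · obtain ⟨r, hr⟩ := hSb.subset_ball (0 : E2)
      have : ∃ b ∈ connectedComponentIn Sᶜ (p i), r ≤ dist b 0 := by
        by_contra hcon
        push Not at hcon
        exact hbd (Metric.isBounded_ball.subset (fun b hb => mem_ball.2 (hcon b hb)))
      obtain ⟨b, hb, hbr⟩ := this
      have h1 := hasLog_conn hS isPreconnected_connectedComponentIn
        (connectedComponentIn_subset Sᶜ (p i)) hmem hb
      have h2 : HasLog S (fun z => phi z - phi b) := hasLog_far (a := 0) (fun z hz =>
        lt_of_lt_of_le (mem_ball.1 (hr hz)) hbr)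
      obtain ⟨L, hL, e⟩ := h1.mul h2
      refine ⟨none, L, hL, fun z hz => ?_⟩
      have hbz : phi z - phi b ≠ 0 := phi_sub_ne (by
        rintro rfl; exact connectedComponentIn_subset _ _ hb hz)
      rw [← e z hz]
      simp only [w, Option.elim]
      field_simp
  choose Q L hL eL using stepA
  have stepB : ∀ i, HasLog (closedBall x R) (fun z => phi z - phi (p i)) := fun i =>
    hasLog_far (a := x) (fun z hz => lt_of_le_of_lt (mem_closedBall.1 hz)
      (not_le.1 (fun h => hpB i (mem_closedBall.2 h))))
  choose M hM eM using stepB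
  let L' : ι → E2 → ℂ := fun i z => L i z + Complex.log (w (Q i) z)
  have eL' : ∀ i, ∀ z ∈ S, Complex.exp (L' i z) = phi z - phi (p i) := by
    intro i z hz
    simp only [L', Complex.exp_add, Complex.exp_log (hw _ z hz), eL i z hz]
  have stepC : ∀ i g, ∃ a : ℤ, L' i (c g) - M i (c g) = a * (2 * Real.pi * Complex.I) := by
    intro i g
    apply Complex.exp_eq_one_iff.1
    rw [Complex.exp_sub, eL' i _ (hc g).1, ← eM i _ (hc g).2]
    exact div_self (phi_sub_ne (by rintro h; exact hpS i (h ▸ (hc g).1)))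
  choose a ha using stepC
  let A : Matrix (κ ⊕ γ) ι ℤ := fun s i => Sum.elim (fun k => if Q i = some k then 1 else 0)
    (fun g => a i g) s
  rw [← Fintype.card_sum]
  refine card_le_of_injective ℤ A.mulVecLin ?_
  rw [← LinearMap.ker_eq_bot, LinearMap.ker_eq_bot']
  intro n hn
  have hk : ∀ k, ∑ i, (if Q i = some k then 1 else 0) * n i = 0 := fun k => congrFun hn (Sum.inl k)
  have hg : ∀ g, ∑ i, a i g * n i = 0 := fun g => congrFun hn (Sum.inr g)
  have hW : ∀ z, ∑ i, (n i : ℂ) * Complex.log (w (Q i) z) = 0 := by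
    intro z
    have h1 : ∀ i, (n i : ℂ) * Complex.log (w (Q i) z) =
        ∑ k, (((if Q i = some k then 1 else 0) * n i : ℤ) : ℂ) * Complex.log (w (some k) z) := by
      intro i
      cases hQ : Q i with
      | none => simp [w]
      | some k => simp
    simp_rw [h1]
    rw [Finset.sum_comm]
    simp_rw [← Finset.sum_mul, ← Int.cast_sum, hk]
    simp
  have hLL' : ∀ z, ∑ i, (n i : ℂ) * L i z = ∑ i, (n i : ℂ) * L' i z := by
    intro z
    simp only [L', mul_add, Finset.sum_add_distrib, hW, add_zero]
  let f : E2 → ℂ := fun z => ∏ i, (phi z - phi (p i)) ^ n i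
  have eS : ∀ z ∈ S, f z = Complex.exp (∑ i, (n i : ℂ) * L i z) := by
    intro z hz
    rw [hLL', Complex.exp_sum]
    exact Finset.prod_congr rfl fun i _ => by rw [Complex.exp_int_mul, eL' i z hz]
  have eB : ∀ z ∈ closedBall x R, f z = Complex.exp (∑ i, (n i : ℂ) * M i z) := by
    intro z hz
    rw [Complex.exp_sum]
    exact Finset.prod_congr rfl fun i _ => by rw [Complex.exp_int_mul, ← eM i z hz]
  have cS : ContinuousOn (fun z => ∑ i, (n i : ℂ) * L i z) S :=
    continuousOn_finsetSum _ fun i _ => continuousOn_const.mul (hL i)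
  have cB : ContinuousOn (fun z => ∑ i, (n i : ℂ) * M i z) (closedBall x R) :=
    continuousOn_finsetSum _ fun i _ => continuousOn_const.mul (hM i)
  have agree : ∀ z ∈ S ∩ closedBall x R, ∑ i, (n i : ℂ) * L i z = ∑ i, (n i : ℂ) * M i z := by
    intro z hz
    obtain ⟨g, hgz⟩ := hcov z hz
    have hsub := connectedComponentIn_subset (S ∩ closedBall x R) z
    have h1 := const_of_exp_one (K := connectedComponentIn (S ∩ closedBall x R) z)
      (D := fun z => ∑ i, (n i : ℂ) * L i z - ∑ i, (n i : ℂ) * M i z)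
      isPreconnected_connectedComponentIn
      ((cS.mono (fun y hy => (hsub hy).1)).sub (cB.mono (fun y hy => (hsub hy).2)))
      (fun y hy => by
        rw [Complex.exp_sub, ← eS y (hsub hy).1, ← eB y (hsub hy).2]
        refine div_self ?_
        rw [eS y (hsub hy).1]
        exact Complex.exp_ne_zero _) (mem_connectedComponentIn hz) hgz
    have h2 : ∑ i, (n i : ℂ) * L i (c g) - ∑ i, (n i : ℂ) * M i (c g) = 0 := by
      rw [hLL', ← Finset.sum_sub_distrib]
      have : ∀ i, (n i : ℂ) * L' i (c g) - n i * M i (c g) =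
          ((a i g * n i : ℤ) : ℂ) * (2 * Real.pi * Complex.I) := by
        intro i
        rw [← mul_sub, ha]; push_cast; ring
      simp_rw [this]
      rw [← Finset.sum_mul, ← Int.cast_sum, hg]
      simp
    rw [h2] at h1
    exact sub_eq_zero.1 h1
  have hlog : HasLog (S ∪ closedBall x R) f := by
    refine ⟨S.piecewise (fun z => ∑ i, (n i : ℂ) * L i z) (fun z => ∑ i, (n i : ℂ) * M i z),
      ?_, ?_⟩
    · refine ContinuousOn.union_of_isClosed ?_ ?_ hS isClosed_closedBall
      · exact cS.congr fun z hz => piecewise_eq_of_mem _ _ _ hz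
      · refine cB.congr fun z hz => ?_
        by_cases hzS : z ∈ S
        · rw [piecewise_eq_of_mem _ _ _ hzS]; exact agree z ⟨hzS, hz⟩
        · rw [piecewise_eq_of_notMem _ _ _ hzS]
    · intro z hz
      by_cases hzS : z ∈ S
      · rw [piecewise_eq_of_mem _ _ _ hzS]; exact eS z hzS
      · rw [piecewise_eq_of_notMem _ _ _ hzS]; exact eB z (hz.resolve_left hzS)
  have hKc : IsClosed (S ∪ closedBall x R) := hS.union isClosed_closedBall
  funext j
  have hne : ∀ i ∈ Finset.univ.erase j, ∀ z ∈ closure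
      (connectedComponentIn (S ∪ closedBall x R)ᶜ (p j)), phi z - phi (p i) ≠ 0 := by
    intro i hi z hz
    apply phi_sub_ne
    rintro rfl
    by_cases hzV : p i ∈ connectedComponentIn (S ∪ closedBall x R)ᶜ (p j)
    · exact hpi j i (Finset.ne_of_mem_erase hi).symm hzV
    · have ho : IsOpen (connectedComponentIn (S ∪ closedBall x R)ᶜ (p j)) :=
        hKc.isOpen_compl.connectedComponentIn
      refine hp i (comp_frontier hKc (p j) ?_)
      rw [ho.frontier_eq]
      exact ⟨hz, hzV⟩
  refine indep hKc (hp j) (hpb j)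
    (u := fun z => ∏ i ∈ Finset.univ.erase j, (phi z - phi (p i)) ^ n i) ?_ ?_ ?_
  · exact continuousOn_finsetProd _ fun i hi =>
      (continuous_phi_sub _).continuousOn.zpow₀ _ fun z hz => Or.inl (hne i hi z hz)
  · intro z hz
    exact Finset.prod_ne_zero_iff.2 fun i hi => zpow_ne_zero _ (hne i hi z hz)
  · refine hlog.congr fun z _ => ?_
    exact Finset.mul_prod_erase Finset.univ (fun i => (phi z - phi (p i)) ^ n i) (Finset.mem_univ j)

def holes (S : Set E2) : Set (Set E2) :=
  {T : Set (EuclideanSpace ℝ (Fin 2)) |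
    (∃ t ∈ Sᶜ, T = connectedComponentIn Sᶜ t) ∧ Bornology.IsBounded T}

lemma holes_card {S : Set E2} (hS : IsClosed S) (hSb : Bornology.IsBounded S) {x : E2} {R : ℝ}
    (hH : (holes S).Finite) (hC : {C | IsCompOf C (S ∩ closedBall x R)}.Finite)
    (F : Finset (Set E2)) (hF : (F : Set (Set E2)) ⊆ holes (S ∪ closedBall x R)) :
    F.card ≤ (holes S).ncard + {C | IsCompOf C (S ∩ closedBall x R)}.ncard := by
  classical
  have h1 : ∀ T : F, ∃ t ∈ (S ∪ closedBall x R)ᶜ,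
      T.1 = connectedComponentIn (S ∪ closedBall x R)ᶜ t := fun T => (hF T.2).1
  choose p hp hpT using h1
  have h2 : ∀ T : hH.toFinset, ∃ t ∈ Sᶜ, T.1 = connectedComponentIn Sᶜ t :=
    fun T => (hH.mem_toFinset.1 T.2).1
  choose q hq hqT using h2
  have h3 : ∀ C : hC.toFinset, ∃ z ∈ S ∩ closedBall x R,
      C.1 = connectedComponentIn (S ∩ closedBall x R) z :=
    fun C => hC.mem_toFinset.1 C.2
  choose c hc hcC using h3
  rw [Set.ncard_eq_toFinset_card _ hH, Set.ncard_eq_toFinset_card _ hC]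
  have := key_count (ι := F) (κ := hH.toFinset) (γ := hC.toFinset) hS hSb p hp
    (fun T => by rw [← hpT]; exact (hF T.2).2) ?_ q hq ?_ c hc ?_
  · simpa only [Fintype.card_coe] using this
  · intro i j hij hmem
    apply hij
    apply Subtype.ext
    rw [hpT i, hpT j]
    exact connectedComponentIn_eq hmem
  · intro i hb
    have hpi : p i ∈ Sᶜ := fun h => hp i (Or.inl h)
    refine ⟨⟨connectedComponentIn Sᶜ (p i), hH.mem_toFinset.2 ⟨⟨p i, hpi, rfl⟩, hb⟩⟩, ?_⟩
    set T : hH.toFinset := ⟨connectedComponentIn Sᶜ (p i), hH.mem_toFinset.2 ⟨⟨p i, hpi, rfl⟩, hb⟩⟩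
    have e : connectedComponentIn Sᶜ (p i) = connectedComponentIn Sᶜ (q T) := hqT T
    rw [e]
    exact mem_connectedComponentIn (hq T)
  · intro z hz
    refine ⟨⟨connectedComponentIn (S ∩ closedBall x R) z, hC.mem_toFinset.2 ⟨z, hz, rfl⟩⟩, ?_⟩
    set T : hC.toFinset :=
      ⟨connectedComponentIn (S ∩ closedBall x R) z, hC.mem_toFinset.2 ⟨z, hz, rfl⟩⟩
    have e : connectedComponentIn (S ∩ closedBall x R) z =
      connectedComponentIn (S ∩ closedBall x R) (c T) := hcC T
    rw [e]
    exact mem_connectedComponentIn (hc T)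

lemma holes_step {S : Set E2} (hS : IsClosed S) (hSb : Bornology.IsBounded S) {x : E2} {R : ℝ}
    (hH : (holes S).Finite) (hC : {C | IsCompOf C (S ∩ closedBall x R)}.Finite) :
    (holes (S ∪ closedBall x R)).Finite ∧ (holes (S ∪ closedBall x R)).ncard ≤
      (holes S).ncard + {C | IsCompOf C (S ∩ closedBall x R)}.ncard := by
  have hfin : (holes (S ∪ closedBall x R)).Finite := by
    by_contra hinf
    obtain ⟨F, hF, hcard⟩ := Set.Infinite.exists_subset_card_eq hinf
      ((holes S).ncard + {C | IsCompOf C (S ∩ closedBall x R)}.ncard + 1)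
    have := holes_card hS hSb hH hC F hF
    omega
  refine ⟨hfin, ?_⟩
  rw [Set.ncard_eq_toFinset_card _ hfin]
  exact holes_card hS hSb hH hC _ (by simp)

lemma surface_isCompact (ω : Finset (E2 × ℝ)) : IsCompact (surface ω) :=
  ω.isCompact_biUnion fun p _ => isCompact_closedBall p.1 p.2

lemma comps_finite (ω : Finset (E2 × ℝ)) (x : E2) (R : ℝ) :
    {C | IsCompOf C (surface ω ∩ closedBall x R)}.Finite := by
  classical
  let pt : E2 × ℝ → E2 := fun p =>
    if h : (closedBall p.1 p.2 ∩ closedBall x R).Nonempty then h.some else 0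
  refine (ω.finite_toSet.image
    (fun p => connectedComponentIn (surface ω ∩ closedBall x R) (pt p))).subset ?_
  rintro C ⟨z, hz, rfl⟩
  obtain ⟨p, hp, hzp⟩ := mem_iUnion₂.1 hz.1
  refine ⟨p, hp, ?_⟩
  have hne : (closedBall p.1 p.2 ∩ closedBall x R).Nonempty := ⟨z, hzp, hz.2⟩
  have hpt : pt p ∈ closedBall p.1 p.2 ∩ closedBall x R := by
    simp only [pt, dif_pos hne]; exact hne.some_mem
  have hconv : IsPreconnected (closedBall p.1 p.2 ∩ closedBall x R) :=
    ((convex_closedBall _ _).inter (convex_closedBall _ _)).isPreconnected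
  have hsub : closedBall p.1 p.2 ∩ closedBall x R ⊆ surface ω ∩ closedBall x R :=
    fun y hy => ⟨mem_iUnion₂.2 ⟨p, hp, hy.1⟩, hy.2⟩
  exact connectedComponentIn_eq (hconv.subset_connectedComponentIn hpt hsub ⟨hzp, hz.2⟩)

lemma holes_finite (ω : Finset (E2 × ℝ)) : (holes (surface ω)).Finite := by
  classical
  induction ω using Finset.induction_on with
  | empty =>
    have : holes (surface ∅) = ∅ := by
      ext T
      simp only [holes, surface, mem_setOf_eq, mem_empty_iff_false, iff_false]
      rintro ⟨⟨t, -, rfl⟩, hb⟩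
      simp only [Finset.notMem_empty, iUnion_of_empty, iUnion_empty, compl_empty,
        connectedComponentIn_univ, PreconnectedSpace.connectedComponent_eq_univ] at hb
      exact NormedSpace.unbounded_univ ℝ E2 hb
    rw [this]
    exact finite_empty
  | insert p ω _ ih =>
    have : surface (insert p ω) = surface ω ∪ closedBall p.1 p.2 := by
      simp only [surface, Finset.set_biUnion_insert]
      exact union_comm _ _
    rw [this]
    exact (holes_step (surface_isCompact ω).isClosed (surface_isCompact ω).isBounded ih
      (comps_finite ω p.1 p.2)).1

lemma comps_card (K : Set E2) (hK : IsClosed K) {x : E2} {R : ℝ} (hKB : K ⊆ closedBall x R)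
    (hR : 0 ≤ R) {α : ℝ} (hα : 0 < α)
    (hfin : {C | IsCompOf C K}.Finite)
    (hgood : ∀ C, IsCompOf C K → ENNReal.ofReal α ≤ volume C) :
    ({C | IsCompOf C K}.ncard : ℝ) * α ≤ Real.pi * R ^ 2 := by
  rw [Set.ncard_eq_toFinset_card _ hfin]
  have hmem : ∀ C ∈ hfin.toFinset, IsCompOf C K := fun C hC => hfin.mem_toFinset.1 hC
  have hmeas : ∀ C ∈ hfin.toFinset, MeasurableSet C := by
    intro C hC
    obtain ⟨z, hz, rfl⟩ := hmem C hC
    apply IsClosed.measurableSet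
    apply isClosed_of_closure_subset
    exact isPreconnected_connectedComponentIn.closure.subset_connectedComponentIn
      (subset_closure (mem_connectedComponentIn hz))
      (closure_minimal (connectedComponentIn_subset _ _) hK)
  have hdisj : (hfin.toFinset : Set (Set E2)).PairwiseDisjoint id := by
    intro C hC D hD hne
    obtain ⟨z, hz, rfl⟩ := hmem C hC
    obtain ⟨w, hw, rfl⟩ := hmem D hD
    refine Set.disjoint_left.2 fun y hy hy' => hne ?_
    exact (connectedComponentIn_eq hy).trans (connectedComponentIn_eq hy').symm
  have h1 : ∑ C ∈ hfin.toFinset, volume C ≤ volume (closedBall x R) := by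
    refine (measure_biUnion_finset (μ := volume) (f := id) hdisj hmeas).symm.le.trans ?_
    refine measure_mono (iUnion₂_subset fun C hC => ?_)
    obtain ⟨z, hz, rfl⟩ := hmem C hC
    exact (connectedComponentIn_subset _ _).trans hKB
  have h2 : (hfin.toFinset.card : ENNReal) * ENNReal.ofReal α ≤ volume (closedBall x R) := by
    refine le_trans ?_ h1
    rw [← nsmul_eq_mul]
    exact Finset.card_nsmul_le_sum _ _ _ fun C hC => hgood C (hmem C hC)
  rw [EuclideanSpace.volume_closedBall_fin_two, ← ENNReal.ofReal_natCast,
    ← ENNReal.ofReal_mul (by positivity), ← ENNReal.ofReal_pow hR,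
    ← ENNReal.ofReal_mul (by positivity), ENNReal.ofReal_le_ofReal_iff (by positivity)] at h2
  linarith

theorem stmt_5 (R₀ R₁ : ℝ) (hR₀ : 0 < R₀) (hR₀₁ : R₀ ≤ R₁)
    (ω : Finset (EuclideanSpace ℝ (Fin 2) × ℝ))
    (hω : ∀ p ∈ ω, p.2 ∈ Set.Icc R₀ R₁)
    (α : ℝ) (hα : 0 < α)
    (x : EuclideanSpace ℝ (Fin 2)) (R : ℝ) (hR : R ∈ Set.Icc R₀ R₁)
    (hgood : ∀ C, IsCompOf C (surface ω ∩ Metric.closedBall x R) →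
      ENNReal.ofReal α ≤ volume C) :
    (nhol (surface ω ∪ Metric.closedBall x R) : ℝ) - (nhol (surface ω) : ℝ) ≤
      Real.pi * R₁ ^ 2 / α := by
  have hc := surface_isCompact ω
  have hR0 : 0 ≤ R := hR₀.le.trans hR.1
  have h1 : nhol (surface ω ∪ closedBall x R) ≤ nhol (surface ω) + _ :=
    (holes_step hc.isClosed hc.isBounded (holes_finite ω) (comps_finite ω x R)).2
  have h2 := comps_card (surface ω ∩ closedBall x R) (hc.isClosed.inter isClosed_closedBall)
    inter_subset_right hR0 hα (comps_finite ω x R) hgood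
  have h3 : Real.pi * R ^ 2 ≤ Real.pi * R₁ ^ 2 := by
    have := hR.2
    gcongr
  have h4 : ((nhol (surface ω ∪ closedBall x R) : ℕ) : ℝ) ≤ nhol (surface ω) +
    ({C | IsCompOf C (surface ω ∩ closedBall x R)}.ncard : ℝ) := by exact_mod_cast h1
  have h5 := (le_div_iff₀ hα).2 (h2.trans h3)
  linarith
end

section
/- Let ω be a configuration, x ∈ ℝ² and R > 0. Denote by N_hol(S) the number of bounded connected components of ℝ² ∖ S. Then the number of holes created when the ball B̄(x,R) is added to ω̄ is controlled by the intersection: N_hol(ω̄ ∪ B̄(x,R)) − N_hol(ω̄) is at most the number of connected components of the set ω̄ ∩ B̄(x,R). -/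
open Metric Set

/-- The number of connected components of a subset of the plane. -/
noncomputable def ncc (S : Set (EuclideanSpace ℝ (Fin 2))) : ℕ :=
  {C : Set (EuclideanSpace ℝ (Fin 2)) | ∃ x ∈ S, C = connectedComponentIn S x}.ncard

namespace Holes

open Topology Filter

local notation "E" => EuclideanSpace ℝ (Fin 2)

/-- The standard complex coordinate on the plane. -/
noncomputable def ζ : E ≃ₗᵢ[ℝ] ℂ := Complex.orthonormalBasisOneI.repr.symm

lemma norm_ζ (z p : E) : ‖ζ z - ζ p‖ = dist z p := by
  rw [← map_sub, LinearIsometryEquiv.norm_map, dist_eq_norm]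

lemma ζ_ne {z p : E} (h : z ≠ p) : ζ z - ζ p ≠ 0 := by
  rw [sub_ne_zero]; exact fun h' => h (ζ.injective h')

lemma cont_ζ : Continuous (ζ : E → ℂ) := ζ.continuous

/-- A continuous function with constant exponential on a preconnected set is constant. -/
lemma const_of_exp {X : Type*} [TopologicalSpace X] {s : Set X} (hs : IsPreconnected s)
    {f : X → ℂ} (hf : ContinuousOn f s)
    (he : ∀ a ∈ s, ∀ b ∈ s, Complex.exp (f a) = Complex.exp (f b))
    {a b : X} (ha : a ∈ s) (hb : b ∈ s) : f a = f b :=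
  Complex.isCoveringMap_exp.constOn_of_comp hs hf
    (fun a ha b hb => Subtype.ext (he a ha b hb)) ha hb

lemma exists_log {F : E → ℂ} (hF : Continuous F) (h0 : ∀ z, F z ≠ 0) :
    ∃ g : E → ℂ, Continuous g ∧ ∀ z, Complex.exp (g z) = F z := by
  have hU : IsSimplyConnected (univ : Set E) := by
    have := Convex.contractibleSpace (convex_univ : Convex ℝ (univ : Set E)) ⟨0, trivial⟩
    rw [IsSimplyConnected]
    infer_instance
  obtain ⟨g, hg, h⟩ := Complex.exists_continuousOn_eqOn_exp_comp hU isOpen_univ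
    hF.continuousOn (by rintro ⟨z, -, hz⟩; exact h0 z hz)
  exact ⟨g, continuousOn_univ.1 hg, fun z => h (mem_univ z)⟩

lemma no_log_circle (p : E) {M : ℝ} (hM : 0 < M) {k : ℤ} (hk : k ≠ 0) {g : E → ℂ}
    (hg : Continuous g)
    (h : ∀ z, dist z p = M → Complex.exp (g z) = (ζ z - ζ p) ^ k) : False := by
  let c : ℝ → E := fun θ => ζ.symm (ζ p + M * Complex.exp (θ * Complex.I))
  have hc : Continuous c := by
    refine ζ.symm.continuous.comp ?_
    fun_prop
  have hc1 : ∀ θ, ζ (c θ) - ζ p = M * Complex.exp (θ * Complex.I) := by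
    intro θ; simp [c]
  have hc2 : ∀ θ, dist (c θ) p = M := by
    intro θ
    rw [← norm_ζ, hc1, norm_mul, Complex.norm_exp_ofReal_mul_I]
    simp [abs_of_pos hM]
  let φ : ℝ → ℂ := fun θ => g (c θ) - k * (θ * Complex.I)
  have hφ : Continuous φ := by
    have := hg.comp hc
    simp only [φ]
    exact this.sub (by fun_prop)
  have he : ∀ θ, Complex.exp (φ θ) = (M : ℂ) ^ k := by
    intro θ
    simp only [φ]
    rw [Complex.exp_sub, h _ (hc2 θ), hc1, mul_zpow, Complex.exp_int_mul]
    rw [mul_div_assoc, div_self (zpow_ne_zero _ (Complex.exp_ne_zero _)), mul_one]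
  have h2 := const_of_exp (s := univ) isPreconnected_univ hφ.continuousOn
    (fun a _ b _ => by rw [he, he]) (mem_univ 0) (mem_univ (2 * Real.pi))
  have hcc : c (2 * Real.pi) = c 0 := by
    simp [c, Complex.exp_two_pi_mul_I]
  simp only [φ, hcc] at h2
  have : (k : ℂ) * ((2 * Real.pi : ℝ) * Complex.I) = 0 := by
    simpa using h2.symm
  simp [hk, Real.pi_ne_zero] at this

lemma mem_comp_of_closure {K : Set E} (hK : IsClosed K) {p z : E}
    (hz : z ∈ closure (connectedComponentIn Kᶜ p)) (hzK : z ∉ K) :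
    z ∈ connectedComponentIn Kᶜ p := by
  have hzK' : z ∈ Kᶜ := hzK
  have ho : IsOpen (connectedComponentIn Kᶜ z) := hK.isOpen_compl.connectedComponentIn
  obtain ⟨y, hy1, hy2⟩ := mem_closure_iff.1 hz _ ho (mem_connectedComponentIn hzK')
  rw [connectedComponentIn_eq hy2, ← connectedComponentIn_eq hy1]
  exact mem_connectedComponentIn hzK'

lemma no_log {K : Set E} (hK : IsClosed K) {ι : Type*} [Fintype ι] [DecidableEq ι]
    (p : ι → E) (k : ι → ℤ) (i₀ : ι) (hp : ∀ i, p i ∉ K)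
    (hV : Bornology.IsBounded (connectedComponentIn Kᶜ (p i₀)))
    (hpV : ∀ i, i ≠ i₀ → p i ∉ connectedComponentIn Kᶜ (p i₀)) (hk : k i₀ ≠ 0)
    {g : E → ℂ} (hg : ContinuousOn g K)
    (h : ∀ z ∈ K, ∏ i, (ζ z - ζ (p i)) ^ k i = Complex.exp (g z)) : False := by
  classical
  set V := connectedComponentIn Kᶜ (p i₀) with hVdef
  have hVo : IsOpen V := hK.isOpen_compl.connectedComponentIn
  have hp0 : p i₀ ∈ V := mem_connectedComponentIn (hp i₀)
  obtain ⟨G, hG⟩ := ContinuousMap.exists_restrict_eq hK ⟨K.domRestrict g,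
    continuousOn_iff_continuous_domRestrict.mp hg⟩
  have hGK : ∀ z ∈ K, G z = g z := fun z hz => congrArg (fun f => f ⟨z, hz⟩) hG
  let φ : E → ℂ := fun z => Complex.exp (G z) * ∏ i ∈ Finset.univ.erase i₀,
    (ζ z - ζ (p i)) ^ (-k i)
  let F : E → ℂ := fun z => if z ∈ V then φ z else (ζ z - ζ (p i₀)) ^ k i₀
  have hpc : ∀ i, i ≠ i₀ → p i ∉ closure V := fun i hi hc =>
    hpV i hi (mem_comp_of_closure hK hc (hp i))
  have hφc : ContinuousOn φ (closure V) := by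
    refine ContinuousOn.mul (by fun_prop) (continuousOn_finsetProd _ fun i hi => ?_)
    refine ContinuousOn.zpow₀ ((cont_ζ.sub continuous_const).continuousOn) _ fun z hz => ?_
    refine Or.inl (ζ_ne ?_)
    rintro rfl
    exact hpc i (Finset.ne_of_mem_erase hi) hz
  have hφK : ∀ z ∈ K, φ z = (ζ z - ζ (p i₀)) ^ k i₀ := by
    intro z hz
    have hne : ∀ i, ζ z - ζ (p i) ≠ 0 := fun i => ζ_ne (by rintro rfl; exact hp i hz)
    simp only [φ]
    rw [hGK z hz, ← h z hz, ← Finset.mul_prod_erase _ _ (Finset.mem_univ i₀), mul_assoc,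
      ← Finset.prod_mul_distrib]
    rw [Finset.prod_eq_one, mul_one]
    intro i _
    rw [← zpow_add₀ (hne i), add_neg_cancel, zpow_zero]
  have hFc : Continuous F := by
    rw [← continuousOn_univ]
    have hu : (univ : Set E) = closure V ∪ Vᶜ := by
      ext z; by_cases hz : z ∈ V
      · simp [subset_closure hz]
      · simp [hz]
    rw [hu]
    refine ContinuousOn.union_of_isClosed ?_ ?_ isClosed_closure hVo.isClosed_compl
    · refine hφc.congr fun z hz => ?_
      by_cases hzV : z ∈ V
      · simp [F, hzV]
      · have : z ∈ K := by
          by_contra hzK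
          exact hzV (mem_comp_of_closure hK hz hzK)
        simp [F, hzV, hφK z this]
    · have : ContinuousOn (fun z => (ζ z - ζ (p i₀)) ^ k i₀) Vᶜ := by
        refine ContinuousOn.zpow₀ ((cont_ζ.sub continuous_const).continuousOn) _ fun z hz => ?_
        refine Or.inl (ζ_ne ?_)
        rintro rfl
        exact hz hp0
      refine this.congr fun z hz => ?_
      simp only [F]
      rw [if_neg hz]
  have hF0 : ∀ z, F z ≠ 0 := by
    intro z
    by_cases hz : z ∈ V
    · simp only [F, if_pos hz, φ]
      refine mul_ne_zero (Complex.exp_ne_zero _) (Finset.prod_ne_zero_iff.2 fun i hi => ?_)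
      refine zpow_ne_zero _ (ζ_ne ?_)
      rintro rfl
      exact hpV i (Finset.ne_of_mem_erase hi) hz
    · simp only [F, if_neg hz]
      refine zpow_ne_zero _ (ζ_ne ?_)
      rintro rfl
      exact hz hp0
  obtain ⟨f, hf, hfe⟩ := exists_log hFc hF0
  obtain ⟨M, hM, hVM⟩ := hV.subset_ball_lt 0 (p i₀)
  refine no_log_circle (p i₀) hM hk hf fun z hz => ?_
  have hzV : z ∉ V := fun hz' => by
    have := hVM hz'
    rw [mem_ball, hz] at this
    exact lt_irrefl _ this
  rw [hfe]; simp only [F]; rw [if_neg hzV]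

/-- a perturbation lemma -/
lemma log_ratio {A : Set E} {p q : E} (h : ∀ z ∈ A, dist p q < dist z q) :
    ∃ g : E → ℂ, ContinuousOn g A ∧
      ∀ z ∈ A, ζ z - ζ p = Complex.exp (g z) * (ζ z - ζ q) := by
  have hne : ∀ z ∈ A, ζ z - ζ q ≠ 0 := fun z hz =>
    ζ_ne (by rintro rfl; have := h _ hz; rw [dist_self] at this; exact absurd this (not_lt.2 dist_nonneg))
  have hs : ∀ z ∈ A, (ζ z - ζ p) / (ζ z - ζ q) ∈ Complex.slitPlane := by
    intro z hz
    have : (ζ z - ζ p) / (ζ z - ζ q) = 1 + (ζ q - ζ p) / (ζ z - ζ q) := by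
      field_simp [hne z hz]; ring
    rw [this]
    apply Complex.mem_slitPlane_of_norm_lt_one
    rw [norm_div, norm_ζ, norm_ζ, dist_comm q p, div_lt_one (dist_nonneg.trans_lt (h z hz))]
    exact h z hz
  refine ⟨fun z => Complex.log ((ζ z - ζ p) / (ζ z - ζ q)), ?_, fun z hz => ?_⟩
  · refine ContinuousOn.clog ?_ hs
    exact ((cont_ζ.sub continuous_const).continuousOn).div
      ((cont_ζ.sub continuous_const).continuousOn) hne
  · rw [Complex.exp_log (Complex.slitPlane_ne_zero (hs z hz)), div_mul_cancel₀ _ (hne z hz)]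

lemma log_ball {A : Set E} {p c : E} {r : ℝ} (hA : A ⊆ closedBall c r) (hp : p ∉ closedBall c r) :
    ∃ g : E → ℂ, ContinuousOn g A ∧ ∀ z ∈ A, ζ z - ζ p = Complex.exp (g z) := by
  rw [mem_closedBall, not_le] at hp
  by_cases hne : A.Nonempty
  swap
  · rw [not_nonempty_iff_eq_empty] at hne
    subst hne
    exact ⟨0, by simp, by simp⟩
  have hr : 0 ≤ r := by
    obtain ⟨a, ha⟩ := hne
    exact dist_nonneg.trans (hA ha)
  have hcp : ζ c - ζ p ≠ 0 := ζ_ne (by rintro rfl; rw [dist_self] at hp; exact absurd hp (not_lt.2 hr))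
  have hs : ∀ z ∈ A, (ζ z - ζ p) / (ζ c - ζ p) ∈ Complex.slitPlane := by
    intro z hz
    have : (ζ z - ζ p) / (ζ c - ζ p) = 1 + (ζ z - ζ c) / (ζ c - ζ p) := by
      field_simp; ring
    rw [this]
    apply Complex.mem_slitPlane_of_norm_lt_one
    rw [norm_div, norm_ζ, norm_ζ, dist_comm c p, div_lt_one (hr.trans_lt hp)]
    exact (hA hz).trans_lt hp
  refine ⟨fun z => Complex.log ((ζ z - ζ p) / (ζ c - ζ p)) + Complex.log (ζ c - ζ p), ?_,
    fun z hz => ?_⟩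
  · refine ContinuousOn.add (ContinuousOn.clog ?_ hs) continuousOn_const
    exact ((cont_ζ.sub continuous_const).continuousOn).div_const _
  · rw [Complex.exp_add, Complex.exp_log (Complex.slitPlane_ne_zero (hs z hz)),
      Complex.exp_log hcp, div_mul_cancel₀ _ hcp]

lemma log_comp {A : Set E} (hA : IsClosed A) {p q t : E}
    (hp : p ∈ connectedComponentIn Aᶜ t) (hq : q ∈ connectedComponentIn Aᶜ t) :
    ∃ g : E → ℂ, ContinuousOn g A ∧
      ∀ z ∈ A, ζ z - ζ p = Complex.exp (g z) * (ζ z - ζ q) := by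
  refine IsPreconnected.induction₂ (isPreconnected_connectedComponentIn (F := Aᶜ) (x := t))
    (fun p q => ∃ g : E → ℂ, ContinuousOn g A ∧
      ∀ z ∈ A, ζ z - ζ p = Complex.exp (g z) * (ζ z - ζ q)) ?_ ?_ ?_ hp hq
  · intro x hx
    have hxA : x ∈ Aᶜ := connectedComponentIn_subset _ _ hx
    obtain ⟨ε, hε, hball⟩ := Metric.isOpen_iff.1 hA.isOpen_compl x hxA
    filter_upwards [nhdsWithin_le_nhds (ball_mem_nhds x (half_pos hε))] with y hy
    refine log_ratio fun z hz => ?_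
    have h1 : ε ≤ dist z x := by
      by_contra hlt
      exact hball (mem_ball.2 (not_le.1 hlt)) hz
    rw [mem_ball] at hy
    have h2 := dist_triangle z y x
    rw [dist_comm x y]
    linarith
  · rintro x y z - - - ⟨g, hg, h⟩ ⟨g', hg', h'⟩
    refine ⟨fun w => g w + g' w, hg.add hg', fun w hw => ?_⟩
    rw [h w hw, h' w hw, Complex.exp_add, mul_assoc]
  · rintro x y - - ⟨g, hg, h⟩
    refine ⟨fun w => - g w, hg.neg, fun w hw => ?_⟩
    rw [h w hw, ← mul_assoc, ← Complex.exp_add]; simp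

lemma log_unbdd {A : Set E} (hA : IsCompact A) {p t : E}
    (hp : p ∈ connectedComponentIn Aᶜ t)
    (hu : ¬ Bornology.IsBounded (connectedComponentIn Aᶜ t)) :
    ∃ g : E → ℂ, ContinuousOn g A ∧ ∀ z ∈ A, ζ z - ζ p = Complex.exp (g z) := by
  obtain ⟨r, hr⟩ := hA.isBounded.subset_closedBall 0
  have : ∃ q ∈ connectedComponentIn Aᶜ t, q ∉ closedBall (0 : E) r := by
    by_contra! hcon
    exact hu (isBounded_closedBall.subset hcon)
  obtain ⟨q, hq, hqr⟩ := this
  obtain ⟨g, hg, h⟩ := log_comp hA.isClosed hp hq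
  obtain ⟨g', hg', h'⟩ := log_ball hr hqr
  refine ⟨fun w => g w + g' w, hg.add hg', fun w hw => ?_⟩
  rw [h w hw, h' w hw, Complex.exp_add]

/-- The set of holes. -/
def holes (S : Set E) : Set (Set E) :=
  {T | (∃ t ∈ Sᶜ, T = connectedComponentIn Sᶜ t) ∧ Bornology.IsBounded T}

/-- The set of connected components. -/
def comps (S : Set E) : Set (Set E) := {C | ∃ x ∈ S, C = connectedComponentIn S x}

lemma exists_int_ker {α β : Type*} [Fintype α] [Fintype β] (M : α → β → ℤ)
    (h : Fintype.card α < Fintype.card β) :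
    ∃ k : β → ℤ, k ≠ 0 ∧ ∀ a, ∑ b, M a b * k b = 0 := by
  by_contra! hcon
  let L : (β → ℤ) →ₗ[ℤ] (α → ℤ) := Matrix.mulVecLin (Matrix.of M)
  have hinj : Function.Injective L := by
    rw [← LinearMap.ker_eq_bot, LinearMap.ker_eq_bot']
    intro k hk
    by_contra hk0
    obtain ⟨a, ha⟩ := hcon k hk0
    exact ha (congrFun hk a)
  have := LinearMap.finrank_le_finrank_of_injective hinj
  simp at this
  omega

lemma card_holes_le {A : Set E} (hA : IsCompact A) (x : E) (R : ℝ)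
    (hfh : (holes A).Finite) (hfc : (comps (A ∩ closedBall x R)).Finite)
    (F : Finset (Set E)) (hF : (F : Set (Set E)) ⊆ holes (A ∪ closedBall x R)) :
    F.card ≤ (holes A).ncard + (comps (A ∩ closedBall x R)).ncard := by
  classical
  by_contra! hlt
  set B := closedBall x R with hB
  have hFne : F.Nonempty := by
    rw [← Finset.card_pos]; omega
  let ι := {T // T ∈ F}
  have : Nonempty ι := hFne.to_subtype
  have hp' : ∀ i : ι, ∃ p : E, p ∈ (A ∪ B)ᶜ ∧ i.1 = connectedComponentIn (A ∪ B)ᶜ p :=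
    fun i => (hF i.2).1
  choose p hp hpi using hp'
  have hpA : ∀ i, p i ∉ A := fun i h => hp i (Or.inl h)
  have hpB : ∀ i, p i ∉ B := fun i h => hp i (Or.inr h)
  let comp : ι → Set E := fun i => connectedComponentIn Aᶜ (p i)
  have hpc : ∀ i, p i ∈ comp i := fun i => mem_connectedComponentIn (hpA i)
  let s : Set E → ι := Function.invFun comp
  have hs : ∀ i, comp (s (comp i)) = comp i := fun i => Function.invFun_eq ⟨i, rfl⟩
  have hg' : ∀ i, ∃ g : E → ℂ, ContinuousOn g A ∧ ∀ z ∈ A, ζ z - ζ (p i) = Complex.exp (g z) *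
      (if Bornology.IsBounded (comp i) then ζ z - ζ (p (s (comp i))) else 1) := by
    intro i
    by_cases hb : Bornology.IsBounded (comp i)
    · simp only [if_pos hb]
      refine log_comp hA.isClosed (hpc i) ?_
      have hmem := hpc (s (comp i))
      rw [hs i] at hmem
      exact hmem
    · simp only [if_neg hb, mul_one]
      exact log_unbdd hA (hpc i) hb
  choose g hgc hg using hg'
  have hh' : ∀ i, ∃ h : E → ℂ, ContinuousOn h B ∧ ∀ z ∈ B, ζ z - ζ (p i) = Complex.exp (h z) :=
    fun i => log_ball subset_rfl (hpB i)
  choose h hhc hh using hh'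
  let w : ι → E → ℂ := fun i z =>
    if Bornology.IsBounded (comp i) then h (s (comp i)) z else 0
  have hwc : ∀ i, ContinuousOn (w i) B := by
    intro i
    simp only [w]
    split_ifs
    · exact hhc _
    · exact continuousOn_const
  let e : ι → E → ℂ := fun i z => g i z + w i z - h i z
  have hec : ∀ i, ContinuousOn (e i) (A ∩ B) := fun i =>
    (((hgc i).mono inter_subset_left).add ((hwc i).mono inter_subset_right)).sub
      ((hhc i).mono inter_subset_right)
  have he1 : ∀ i, ∀ z ∈ A ∩ B, Complex.exp (e i z) = 1 := by
    rintro i z ⟨hzA, hzB⟩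
    simp only [e]
    rw [Complex.exp_sub, Complex.exp_add, ← hh i z hzB, hg i z hzA]
    have hw : Complex.exp (w i z) =
        if Bornology.IsBounded (comp i) then ζ z - ζ (p (s (comp i))) else 1 := by
      simp only [w]
      split_ifs
      · rw [hh _ z hzB]
      · simp
    rw [← hw]
    exact div_self (mul_ne_zero (Complex.exp_ne_zero _) (Complex.exp_ne_zero _))
  let J := {T // T ∈ holes A}
  let Λ := {C // C ∈ comps (A ∩ B)}
  have : Fintype J := hfh.fintype
  have : Fintype Λ := hfc.fintype
  have ha' : ∀ C : Λ, ∃ a : E, a ∈ A ∩ B ∧ C.1 = connectedComponentIn (A ∩ B) a :=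
    fun C => C.2
  choose a ha haC using ha'
  have hN' : ∀ (C : Λ) (i : ι), ∃ n : ℤ, e i (a C) = n * (2 * Real.pi * Complex.I) :=
    fun C i => Complex.exp_eq_one_iff.1 (he1 i _ (ha C))
  choose N hN using hN'
  let M : J ⊕ Λ → ι → ℤ := Sum.elim (fun T i => if comp i = T.1 then 1 else 0) N
  have hcard : Fintype.card (J ⊕ Λ) < Fintype.card ι := by
    rw [Fintype.card_sum, Fintype.card_coe]
    have h1 : Fintype.card J = (holes A).ncard := by
      rw [← Nat.card_eq_fintype_card]; rfl
    have h2 : Fintype.card Λ = (comps (A ∩ B)).ncard := by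
      rw [← Nat.card_eq_fintype_card]; rfl
    omega
  obtain ⟨k, hk0, hk⟩ := exists_int_ker M hcard
  have hk1 : ∀ T : J, ∑ i, (if comp i = T.1 then k i else 0) = 0 := by
    intro T
    have := hk (Sum.inl T)
    simpa [M] using this
  have hk2 : ∀ C : Λ, ∑ i, N C i * k i = 0 := fun C => hk (Sum.inr C)
  have hX : ∀ Q : ι → ℂ, ∑ i, (k i : ℂ) *
      (if Bornology.IsBounded (comp i) then Q (s (comp i)) else 0) = 0 := by
    intro Q
    have h1 : ∀ i, (k i : ℂ) * (if Bornology.IsBounded (comp i) then Q (s (comp i)) else 0) =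
        ∑ T : J, ((if comp i = T.1 then k i else 0 : ℤ) : ℂ) * Q (s T.1) := by
      intro i
      by_cases hb : Bornology.IsBounded (comp i)
      · rw [if_pos hb]
        have hT : comp i ∈ holes A := ⟨⟨p i, hpA i, rfl⟩, hb⟩
        rw [Finset.sum_eq_single (⟨comp i, hT⟩ : J)]
        · simp
        · intro T _ hne
          rw [if_neg]
          · simp
          · intro hc
            exact hne (Subtype.ext hc.symm)
        · simp
      · rw [if_neg hb, mul_zero, Finset.sum_eq_zero]
        intro T _
        rw [if_neg]
        · simp
        · intro hc
          exact hb (hc ▸ T.2.2)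
    rw [Finset.sum_congr rfl fun i _ => h1 i, Finset.sum_comm]
    refine Finset.sum_eq_zero fun T _ => ?_
    rw [← Finset.sum_mul, ← Int.cast_sum, hk1 T]
    simp
  have hprod : ∀ (z : E) (u : ι → ℂ), (∀ i, ζ z - ζ (p i) = Complex.exp (u i)) →
      ∏ i, (ζ z - ζ (p i)) ^ k i = Complex.exp (∑ i, (k i : ℂ) * u i) := by
    intro z u hu
    rw [Complex.exp_sum]
    refine Finset.prod_congr rfl fun i _ => ?_
    rw [hu i, Complex.exp_int_mul]
  have hAB : ∀ z ∈ A ∩ B, ∑ i, (k i : ℂ) * g i z = ∑ i, (k i : ℂ) * h i z := by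
    intro z hz
    have hC : connectedComponentIn (A ∩ B) z ∈ comps (A ∩ B) := ⟨z, hz, rfl⟩
    let C : Λ := ⟨_, hC⟩
    have hez : ∀ i, e i z = N C i * (2 * Real.pi * Complex.I) := by
      intro i
      rw [← hN C i]
      refine const_of_exp (s := connectedComponentIn (A ∩ B) z)
        isPreconnected_connectedComponentIn ((hec i).mono (connectedComponentIn_subset _ _))
        (fun b hb c hc => ?_) (mem_connectedComponentIn hz) ?_
      · rw [he1 i b (connectedComponentIn_subset _ _ hb),
          he1 i c (connectedComponentIn_subset _ _ hc)]
      · have := mem_connectedComponentIn (ha C)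
        rw [← haC C] at this
        exact this
    have h1 : ∑ i, (k i : ℂ) * e i z = 0 := by
      have h2 : ((∑ i, N C i * k i : ℤ) : ℂ) * (2 * Real.pi * Complex.I) = 0 := by
        rw [hk2 C]; simp
      rw [← h2]
      push_cast
      rw [Finset.sum_mul]
      refine Finset.sum_congr rfl fun i _ => ?_
      rw [hez i]; ring
    have h3 : ∑ i, (k i : ℂ) * w i z = 0 := hX fun j => h j z
    have h4 : ∑ i, (k i : ℂ) * e i z = ∑ i, (k i : ℂ) * g i z + ∑ i, (k i : ℂ) * w i z
        - ∑ i, (k i : ℂ) * h i z := by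
      rw [← Finset.sum_add_distrib, ← Finset.sum_sub_distrib]
      refine Finset.sum_congr rfl fun i _ => ?_
      simp only [e]; ring
    rw [h1, h3, add_zero] at h4
    exact (sub_eq_zero.1 h4.symm)
  let G : E → ℂ := fun z => if z ∈ A then ∑ i, (k i : ℂ) * g i z else ∑ i, (k i : ℂ) * h i z
  have hGA : ∀ z ∈ A, G z = ∑ i, (k i : ℂ) * g i z := fun z hz => if_pos hz
  have hGB : ∀ z ∈ B, G z = ∑ i, (k i : ℂ) * h i z := by
    intro z hz
    by_cases hzA : z ∈ A
    · rw [hGA z hzA, hAB z ⟨hzA, hz⟩]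
    · exact if_neg hzA
  have hBc : IsClosed B := isClosed_closedBall
  have hGc : ContinuousOn G (A ∪ B) := by
    refine ContinuousOn.union_of_isClosed ?_ ?_ hA.isClosed hBc
    · refine ContinuousOn.congr ?_ hGA
      exact continuousOn_finsetSum _ fun i _ => continuousOn_const.mul (hgc i)
    · refine ContinuousOn.congr ?_ hGB
      exact continuousOn_finsetSum _ fun i _ => continuousOn_const.mul (hhc i)
  obtain ⟨i₀, hi₀⟩ := Function.ne_iff.1 hk0
  refine no_log (hA.isClosed.union hBc) p k i₀ hp ?_ ?_ hi₀ hGc ?_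
  · rw [← hpi]; exact (hF i₀.2).2
  · intro i hi hmem
    apply hi
    apply Subtype.ext
    rw [hpi i, hpi i₀]
    exact (connectedComponentIn_eq hmem).symm
  · rintro z (hz | hz)
    · rw [hGA z hz]
      rw [hprod z (fun i => g i z + if Bornology.IsBounded (comp i) then
        Complex.log (ζ z - ζ (p (s (comp i)))) else 0)]
      · simp only [mul_add]
        rw [Finset.sum_add_distrib, hX fun j => Complex.log (ζ z - ζ (p j)), add_zero]
      · intro i
        rw [hg i z hz, Complex.exp_add]
        congr 1
        split_ifs
        · rw [Complex.exp_log]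
          refine ζ_ne ?_
          rintro rfl
          exact hpA _ hz
        · simp
    · rw [hGB z hz, hprod z (fun i => h i z) fun i => hh i z hz]

lemma holes_finite_ncard {A : Set E} (hA : IsCompact A) (x : E) (R : ℝ)
    (hfh : (holes A).Finite) (hfc : (comps (A ∩ closedBall x R)).Finite) :
    (holes (A ∪ closedBall x R)).Finite ∧ (holes (A ∪ closedBall x R)).ncard ≤
      (holes A).ncard + (comps (A ∩ closedBall x R)).ncard := by
  have hmain := card_holes_le hA x R hfh hfc
  have hfin : (holes (A ∪ closedBall x R)).Finite := by
    by_contra hinf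
    obtain ⟨F, hF, hc⟩ := Set.Infinite.exists_subset_card_eq hinf
      ((holes A).ncard + (comps (A ∩ closedBall x R)).ncard + 1)
    have := hmain F hF
    omega
  refine ⟨hfin, ?_⟩
  have := hmain hfin.toFinset (by simp)
  rwa [← Set.ncard_eq_toFinset_card _ hfin] at this

lemma comps_finite (ω : Finset (E × ℝ)) (x : E) (R : ℝ) :
    (comps (surface ω ∩ closedBall x R)).Finite := by
  classical
  set S := surface ω ∩ closedBall x R with hS
  let c : E × ℝ → E := fun p =>
    if h : (closedBall p.1 p.2 ∩ closedBall x R).Nonempty then h.some else 0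
  refine (ω.finite_toSet.image fun p => connectedComponentIn S (c p)).subset ?_
  rintro C ⟨y, hy, rfl⟩
  obtain ⟨hy1, hy2⟩ := hy
  simp only [surface, mem_iUnion] at hy1
  obtain ⟨p, hp, hyp⟩ := hy1
  have hne : (closedBall p.1 p.2 ∩ closedBall x R).Nonempty := ⟨y, hyp, hy2⟩
  refine ⟨p, hp, ?_⟩
  have hc : c p ∈ closedBall p.1 p.2 ∩ closedBall x R := by
    simp only [c, dif_pos hne]; exact hne.some_mem
  have hpre : IsPreconnected (closedBall p.1 p.2 ∩ closedBall x R) :=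
    ((convex_closedBall p.1 p.2).inter (convex_closedBall x R)).isPreconnected
  have hsub : closedBall p.1 p.2 ∩ closedBall x R ⊆ S := by
    rintro z ⟨hz1, hz2⟩
    exact ⟨mem_biUnion (x := p) hp hz1, hz2⟩
  exact connectedComponentIn_eq (hpre.subset_connectedComponentIn hc hsub ⟨hyp, hy2⟩)

lemma surface_compact (ω : Finset (E × ℝ)) : IsCompact (surface ω) :=
  ω.finite_toSet.isCompact_biUnion fun p _ => isCompact_closedBall p.1 p.2

lemma holes_surface_finite (ω : Finset (E × ℝ)) : (holes (surface ω)).Finite := by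
  classical
  induction ω using Finset.induction_on with
  | empty =>
    have : holes (surface ∅) = ∅ := by
      rw [eq_empty_iff_forall_notMem]
      rintro T ⟨⟨t, -, rfl⟩, hb⟩
      have h1 : (surface ∅)ᶜ = (univ : Set E) := by simp [surface]
      rw [h1, connectedComponentIn_univ, PreconnectedSpace.connectedComponent_eq_univ] at hb
      exact NormedSpace.unbounded_univ ℝ E hb
    rw [this]
    exact finite_empty
  | insert p ω _ ih =>
    have : surface (insert p ω) = surface ω ∪ closedBall p.1 p.2 := by
      simp [surface, union_comm]
    rw [this]
    exact (holes_finite_ncard (surface_compact ω) p.1 p.2 ih (comps_finite ω _ _)).1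

end Holes

theorem stmt_7 (R₀ R₁ : ℝ) (hR₀ : 0 < R₀) (hR₀₁ : R₀ ≤ R₁)
    (ω : Finset (EuclideanSpace ℝ (Fin 2) × ℝ))
    (hω : ∀ p ∈ ω, p.2 ∈ Set.Icc R₀ R₁)
    (x : EuclideanSpace ℝ (Fin 2)) (R : ℝ) (hR : 0 < R) :
    (nhol (surface ω ∪ Metric.closedBall x R) : ℝ) - (nhol (surface ω) : ℝ) ≤
      (ncc (surface ω ∩ Metric.closedBall x R) : ℝ) := by
  have h := (Holes.holes_finite_ncard (Holes.surface_compact ω) x R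
    (Holes.holes_surface_finite ω) (Holes.comps_finite ω x R)).2
  have h' : nhol (surface ω ∪ Metric.closedBall x R) ≤
    nhol (surface ω) + ncc (surface ω ∩ Metric.closedBall x R) := h
  rw [sub_le_iff_le_add']
  exact_mod_cast h'
end

section
/- Fix a bounded Borel set Δ ⊆ ℝ². For α > 0, ε > 0 and a configuration ω all of whose germs lie in Δ, define Bad(ω, α, ε) as the set of points x ∈ ℝ² for which there exists R ∈ [R₀, R₀ + ε] such that ω̄ ∩ B̄(x,R) is nonempty and has at least one connected component of two-dimensional Lebesgue measure at most α. Then for every δ > 0 there exist α > 0 and ε > 0 such that λ(Bad(ω, α, ε)) ≤ δ for every configuration ω with all germs in Δ; i.e., the area of the bad set tends to 0 as α and ε tend to 0, uniformly over such configurations. -/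
open Metric Set MeasureTheory

/-- The bad set: points `x` for which some radius `R ∈ [R₀, R₀ + ε]` makes the couple
`(x, R)` not good, i.e. `ω̄ ∩ B̄(x,R)` is nonempty and has a connected component of
Lebesgue measure at most `α`. -/
def badSet (R₀ : ℝ) (ω : Finset (EuclideanSpace ℝ (Fin 2) × ℝ)) (α ε : ℝ) :
    Set (EuclideanSpace ℝ (Fin 2)) :=
  {x | ∃ R ∈ Set.Icc R₀ (R₀ + ε),
    (surface ω ∩ Metric.closedBall x R).Nonempty ∧
    ∃ C, IsCompOf C (surface ω ∩ Metric.closedBall x R) ∧ volume C ≤ ENNReal.ofReal α}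

/-- Comparing squares. -/
lemma le_of_sq_aux {a b : ℝ} (hb : 0 ≤ b) (h : a ^ 2 ≤ b ^ 2) : a ≤ b := by
  by_contra hc
  push Not at hc
  nlinarith

/-- Component of `w` along direction `θ`. -/
noncomputable def parC (θ : ℝ) (w : EuclideanSpace ℝ (Fin 2)) : ℝ :=
  w 0 * Real.cos θ + w 1 * Real.sin θ

/-- Component of `w` orthogonal to direction `θ`. -/
noncomputable def perpC (θ : ℝ) (w : EuclideanSpace ℝ (Fin 2)) : ℝ :=
  - w 0 * Real.sin θ + w 1 * Real.cos θ

/-- The unit vector of direction `θ`. -/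
noncomputable def dirU (θ : ℝ) : EuclideanSpace ℝ (Fin 2) := !₂[Real.cos θ, Real.sin θ]

lemma norm_sq_coord (w : EuclideanSpace ℝ (Fin 2)) : ‖w‖ ^ 2 = w 0 ^ 2 + w 1 ^ 2 := by
  rw [EuclideanSpace.norm_sq_eq]; simp [Fin.sum_univ_two]

lemma norm_sq_par (θ : ℝ) (w : EuclideanSpace ℝ (Fin 2)) :
    ‖w‖ ^ 2 = parC θ w ^ 2 + perpC θ w ^ 2 := by
  rw [norm_sq_coord]; unfold parC perpC
  have := Real.sin_sq_add_cos_sq θ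
  linear_combination (-(w 0)^2 - (w 1)^2) * this

lemma norm_dirU (θ : ℝ) : ‖dirU θ‖ = 1 := by
  have h : ‖dirU θ‖ ^ 2 = 1 := by
    rw [norm_sq_coord]; simp [dirU]
  nlinarith [norm_nonneg (dirU θ)]

lemma parC_shift (θ s : ℝ) (w : EuclideanSpace ℝ (Fin 2)) :
    parC θ (w - s • dirU θ) = parC θ w - s := by
  simp only [parC, dirU, PiLp.sub_apply, PiLp.smul_apply, smul_eq_mul]
  simp
  have := Real.sin_sq_add_cos_sq θ
  linear_combination (-s) * this

lemma perpC_shift (θ s : ℝ) (w : EuclideanSpace ℝ (Fin 2)) :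
    perpC θ (w - s • dirU θ) = perpC θ w := by
  simp only [perpC, dirU, PiLp.sub_apply, PiLp.smul_apply, smul_eq_mul]
  simp
  ring

lemma parC_le_norm (θ : ℝ) (w : EuclideanSpace ℝ (Fin 2)) : parC θ w ≤ ‖w‖ := by
  have := norm_sq_par θ w
  apply le_of_sq_aux (norm_nonneg w)
  nlinarith [sq_nonneg (perpC θ w)]

lemma continuous_parC (θ : ℝ) : Continuous (parC θ) := by
  unfold parC; fun_prop

lemma continuous_perpC (θ : ℝ) : Continuous (perpC θ) := by
  unfold perpC; fun_prop

/-- The measurable set covering bad points of direction `θ`. -/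
def covA (R₀ : ℝ) (ω : Finset (EuclideanSpace ℝ (Fin 2) × ℝ)) (θ κ ε d : ℝ) :
    Set (EuclideanSpace ℝ (Fin 2)) :=
  {x | (∃ p ∈ ω, ‖p.1 - x‖ ≤ p.2 + R₀ + ε ∧ |perpC θ (p.1 - x)| ≤ κ ∧
          3 / 2 * R₀ ≤ parC θ (p.1 - x)) ∧
       ∀ p ∈ ω, |perpC θ (p.1 - x)| ≤ κ → R₀ ≤ parC θ (p.1 - x) → p.2 + R₀ - d ≤ ‖p.1 - x‖}

lemma measurableSet_covA (R₀ : ℝ) (ω : Finset (EuclideanSpace ℝ (Fin 2) × ℝ)) (θ κ ε d : ℝ) :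
    MeasurableSet (covA R₀ ω θ κ ε d) := by
  have h1 : ∀ p : EuclideanSpace ℝ (Fin 2) × ℝ, Continuous fun x => ‖p.1 - x‖ := by
    intro p; fun_prop
  have h2 : ∀ p : EuclideanSpace ℝ (Fin 2) × ℝ, Continuous fun x => |perpC θ (p.1 - x)| := by
    intro p; exact ((continuous_perpC θ).comp (by fun_prop)).abs
  have h3 : ∀ p : EuclideanSpace ℝ (Fin 2) × ℝ, Continuous fun x => parC θ (p.1 - x) := by
    intro p; exact (continuous_parC θ).comp (by fun_prop)
  have e : covA R₀ ω θ κ ε d =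
      (⋃ p ∈ ω, ({x | ‖p.1 - x‖ ≤ p.2 + R₀ + ε} ∩ ({x | |perpC θ (p.1 - x)| ≤ κ} ∩
        {x | 3 / 2 * R₀ ≤ parC θ (p.1 - x)}))) ∩
      (⋂ p ∈ ω, ({x | |perpC θ (p.1 - x)| ≤ κ}ᶜ ∪ ({x | R₀ ≤ parC θ (p.1 - x)}ᶜ ∪
        {x | p.2 + R₀ - d ≤ ‖p.1 - x‖}))) := by
    ext x
    simp only [covA, mem_ofPred_eq, mem_inter_iff, mem_iUnion, mem_iInter, mem_union, mem_compl_iff,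
      exists_prop, imp_iff_not_or]
  rw [e]
  refine MeasurableSet.inter (Finset.measurableSet_biUnion _ fun p _ => ?_)
    (Finset.measurableSet_biInter _ fun p _ => ?_)
  · exact (isClosed_le (h1 p) continuous_const).measurableSet.inter
      ((isClosed_le (h2 p) continuous_const).measurableSet.inter
        (isClosed_le continuous_const (h3 p)).measurableSet)
  · exact (isClosed_le (h2 p) continuous_const).measurableSet.compl.union
      ((isClosed_le continuous_const (h3 p)).measurableSet.compl.union
        (isClosed_le continuous_const (h1 p)).measurableSet)

lemma covA_shift {R₀ : ℝ} (hR₀ : 0 < R₀) {ω : Finset (EuclideanSpace ℝ (Fin 2) × ℝ)}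
    {θ κ ε d s : ℝ} (hs : ε + d + κ ^ 2 / (2 * R₀) < s) (hs2 : s ≤ R₀ / 2)
    {x : EuclideanSpace ℝ (Fin 2)} (hx : x ∈ covA R₀ ω θ κ ε d)
    (hx' : x + s • dirU θ ∈ covA R₀ ω θ κ ε d) : False := by
  obtain ⟨⟨p, hp, h1, h2, h3⟩, -⟩ := hx
  have h := hx'.2 p hp
  have e : p.1 - (x + s • dirU θ) = (p.1 - x) - s • dirU θ := by abel
  rw [e, perpC_shift, parC_shift] at h
  have h4 := h h2 (by linarith)
  have h5 := norm_sq_par θ ((p.1 - x) - s • dirU θ)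
  rw [perpC_shift, parC_shift] at h5
  have h6 := parC_le_norm θ (p.1 - x)
  set a := parC θ (p.1 - x)
  set b := perpC θ (p.1 - x)
  have hb : b ^ 2 ≤ κ ^ 2 := by
    rw [← sq_abs b]; exact pow_le_pow_left₀ (abs_nonneg _) h2 2
  set q := κ ^ 2 / (2 * R₀) with hq
  have hq0 : 0 ≤ q := by positivity
  have hq2 : κ ^ 2 = 2 * R₀ * q := by rw [hq]; field_simp
  have h7 : ‖(p.1 - x) - s • dirU θ‖ ≤ (a - s) + q := by
    apply le_of_sq_aux (by linarith)
    rw [h5]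
    nlinarith
  linarith

lemma vol_covA {R₀ : ℝ} (hR₀ : 0 < R₀) {ω : Finset (EuclideanSpace ℝ (Fin 2) × ℝ)}
    {θ κ ε d : ℝ} {N : ℕ} (hN : 0 < N)
    (hs : ε + d + κ ^ 2 / (2 * R₀) < R₀ / (2 * N)) {ρ : ℝ}
    (hρ : covA R₀ ω θ κ ε d ⊆ closedBall 0 ρ) :
    (N : ENNReal) * volume (covA R₀ ω θ κ ε d) ≤
      volume (closedBall (0 : EuclideanSpace ℝ (Fin 2)) (ρ + R₀)) := by
  set A := covA R₀ ω θ κ ε d with hA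
  have hAm : MeasurableSet A := measurableSet_covA _ _ _ _ _ _
  set τ := R₀ / (2 * N) with hτ
  have hN' : (0 : ℝ) < N := by exact_mod_cast hN
  have hτ0 : 0 < τ := by positivity
  have hNτ : N * τ = R₀ / 2 := by rw [hτ]; field_simp
  let T : ℕ → Set (EuclideanSpace ℝ (Fin 2)) := fun i =>
    (fun x => x + (-((i : ℝ) * τ)) • dirU θ) ⁻¹' A
  have hTv : ∀ i, volume (T i) = volume A := fun i => measure_preimage_add_right _ _ _
  have hTm : ∀ i, MeasurableSet (T i) := fun i => hAm.preimage (by fun_prop)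
  have key : ∀ i j : ℕ, i < j → j < N → Disjoint (T i) (T j) := by
    intro i j hij hj
    rw [Set.disjoint_left]
    intro x hi hj'
    have hij' : (1 : ℝ) ≤ (j : ℝ) - i := by
      have : (i : ℝ) + 1 ≤ j := by exact_mod_cast hij
      linarith
    have hjN : (j : ℝ) - i ≤ N := by
      have : (j : ℝ) ≤ N := by exact_mod_cast hj.le
      have : (0 : ℝ) ≤ i := by positivity
      linarith
    refine covA_shift hR₀ (s := ((j : ℝ) - i) * τ) (x := x + (-((j : ℝ) * τ)) • dirU θ)
      (θ := θ) (ω := ω) (κ := κ) (ε := ε) (d := d) ?_ ?_ hj' ?_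
    · nlinarith
    · nlinarith
    · have : x + (-((j : ℝ) * τ)) • dirU θ + (((j : ℝ) - i) * τ) • dirU θ
          = x + (-((i : ℝ) * τ)) • dirU θ := by
        rw [add_assoc, ← add_smul]; congr 2; ring
      rw [this]; exact hi
  have hdis : (↑(Finset.range N) : Set ℕ).PairwiseDisjoint T := by
    intro i hi j hj hne
    simp only [Finset.coe_range, mem_Iio] at hi hj
    rcases lt_or_gt_of_ne hne with h | h
    · exact key i j h hj
    · exact (key j i h hi).symm
  have hU := measure_biUnion_finset (μ := volume) hdis (fun i _ => hTm i)
  simp only [hTv, Finset.sum_const, Finset.card_range, nsmul_eq_mul] at hU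
  rw [← hU]
  apply measure_mono
  intro x hx
  simp only [mem_iUnion, Finset.mem_range] at hx
  obtain ⟨i, hi, hx⟩ := hx
  have h1 : ‖x + (-((i : ℝ) * τ)) • dirU θ‖ ≤ ρ := by
    have := hρ hx
    simpa [mem_closedBall, dist_zero_right] using this
  have h2 : ‖((i : ℝ) * τ) • dirU θ‖ ≤ R₀ := by
    rw [norm_smul, norm_dirU, mul_one, Real.norm_of_nonneg (by positivity)]
    have : (i : ℝ) ≤ N := by exact_mod_cast hi.le
    nlinarith
  rw [mem_closedBall, dist_zero_right]
  have h3 : x = (x + (-((i : ℝ) * τ)) • dirU θ) + ((i : ℝ) * τ) • dirU θ := by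
    rw [add_assoc, ← add_smul]; simp
  rw [h3]
  exact (norm_add_le _ _).trans (add_le_add h1 h2)

/-- A lens of depth at least `2ρ` contains a ball of radius `ρ`. -/
lemma lens_vol {x y : EuclideanSpace ℝ (Fin 2)} {R r ρ : ℝ} (hR : ρ < R) (hr : ρ < r)
    (h : ‖y - x‖ ≤ R + r - 2 * ρ) :
    volume (closedBall (0 : EuclideanSpace ℝ (Fin 2)) ρ) ≤
      volume (closedBall y r ∩ closedBall x R) := by
  set t := (R - ρ) / (R + r - 2 * ρ) with ht
  have hpos : 0 < R + r - 2 * ρ := by linarith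
  have ht0 : 0 ≤ t := div_nonneg (by linarith) hpos.le
  have h1t : 1 - t = (r - ρ) / (R + r - 2 * ρ) := by
    rw [ht, eq_div_iff hpos.ne', sub_mul, div_mul_cancel₀ _ hpos.ne']; ring
  have h1t0 : 0 ≤ 1 - t := by rw [h1t]; exact div_nonneg (by linarith) hpos.le
  have e1 : t * (R + r - 2 * ρ) = R - ρ := div_mul_cancel₀ _ hpos.ne'
  have e2 : (1 - t) * (R + r - 2 * ρ) = r - ρ := by rw [h1t]; exact div_mul_cancel₀ _ hpos.ne'
  set q := x + t • (y - x) with hq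
  have hqx : dist q x ≤ R - ρ := by
    rw [dist_eq_norm, hq, add_sub_cancel_left, norm_smul, Real.norm_of_nonneg ht0]
    nlinarith
  have hqy : dist q y ≤ r - ρ := by
    have : q - y = (-(1 - t)) • (y - x) := by rw [hq]; module
    rw [dist_eq_norm, this, norm_smul, norm_neg, Real.norm_of_nonneg h1t0]
    nlinarith
  have hv : volume (closedBall (0 : EuclideanSpace ℝ (Fin 2)) ρ) = volume (closedBall q ρ) := by
    rw [Measure.addHaar_closedBall_center]
    rw [← Measure.addHaar_closedBall_center volume q]
  rw [Measure.addHaar_closedBall_center volume q] at hv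
  rw [← Measure.addHaar_closedBall_center volume q ρ]
  apply measure_mono
  apply subset_inter
  · exact closedBall_subset_closedBall' (by linarith)
  · exact closedBall_subset_closedBall' (by linarith)

/-- The nearest point on the ray lies in the other deep ball. -/
lemma common_point {R₀ κ ε d θ R r r' : ℝ} {x y y' : EuclideanSpace ℝ (Fin 2)}
    (hR₀ : 0 < R₀) (hd : d * R₀ = 5 * κ ^ 2) (hd4 : d ≤ R₀ / 4)
    (hε : ε ≤ R₀ / 4) (hR : R₀ ≤ R) (hRε : R ≤ R₀ + ε) (hr : R₀ ≤ r) (hr' : R₀ ≤ r')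
    (hw1 : 7 / 4 * R₀ ≤ ‖y - x‖) (hw2 : ‖y - x‖ ≤ r + R)
    (hκ : |perpC θ (y - x)| ≤ κ) (ha : 3 / 2 * R₀ ≤ parC θ (y - x))
    (hκ' : |perpC θ (y' - x)| ≤ κ) (ha' : R₀ ≤ parC θ (y' - x))
    (hdeep : ‖y' - x‖ ≤ r' + R₀ - d) :
    ∃ p, p ∈ closedBall y r ∧ p ∈ closedBall y' r' ∧ p ∈ closedBall x R := by
  have hW : 0 < ‖y - x‖ := by linarith
  set W := ‖y - x‖ with hWd
  set t := R / W with ht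
  have hRp : 0 < R := by linarith
  have ht0 : 0 < t := by positivity
  have ht1 : t ≤ 1 := by rw [ht, div_le_one hW]; linarith
  have htW : t * W = R := by rw [ht]; field_simp
  refine ⟨x + t • (y - x), ?_, ?_, ?_⟩
  · have : x + t • (y - x) - y = (-(1 - t)) • (y - x) := by module
    rw [mem_closedBall, dist_eq_norm, this, norm_smul, norm_neg,
      Real.norm_of_nonneg (by linarith), ← hWd]
    nlinarith
  · have hκ0 : 0 ≤ κ := (abs_nonneg _).trans hκ
    have e : x + t • (y - x) - y' = t • (y - x) - (y' - x) := by module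
    rw [mem_closedBall, dist_eq_norm, e]
    have hn := norm_sq_par θ (t • (y - x) - (y' - x))
    have e1 : parC θ (t • (y - x) - (y' - x)) = t * parC θ (y - x) - parC θ (y' - x) := by
      simp only [parC, PiLp.sub_apply, PiLp.smul_apply, smul_eq_mul]; ring
    have e2 : perpC θ (t • (y - x) - (y' - x)) = t * perpC θ (y - x) - perpC θ (y' - x) := by
      simp only [perpC, PiLp.sub_apply, PiLp.smul_apply, smul_eq_mul]; ring
    rw [e1, e2] at hn
    have hnw := norm_sq_par θ (y - x)
    have hle := parC_le_norm θ (y - x)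
    have hle' := parC_le_norm θ (y' - x)
    rw [← hWd] at hnw hle
    set a := parC θ (y - x)
    set b := perpC θ (y - x)
    set a' := parC θ (y' - x)
    set b' := perpC θ (y' - x)
    have hb : b ^ 2 ≤ κ ^ 2 := by
      rw [← sq_abs b]; exact pow_le_pow_left₀ (abs_nonneg _) hκ 2
    set h := κ ^ 2 / R₀ with hh
    have hh0 : 0 ≤ h := by positivity
    have hh1 : κ ^ 2 = R₀ * h := by rw [hh]; field_simp
    have hdh : d = 5 * h := by
      have : d * R₀ = (5 * h) * R₀ := by rw [hd, hh1]; ring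
      exact mul_right_cancel₀ hR₀.ne' this
    have hWa : W - a ≤ h := by nlinarith
    have hta : R - t * a ≤ h := by
      have : R - t * a = t * (W - a) := by rw [mul_sub, htW]
      rw [this]; nlinarith
    have hta2 : t * a ≤ R := by rw [← htW]; exact mul_le_mul_of_nonneg_left hle ht0.le
    have hperp : (t * b - b') ^ 2 ≤ 4 * (R₀ * h) := by
      rw [← hh1]
      have : |t * b - b'| ≤ 2 * κ := by
        calc |t * b - b'| ≤ |t * b| + |b'| := abs_sub _ _
          _ ≤ κ + κ := by
            apply add_le_add _ hκ'
            rw [abs_mul, abs_of_pos ht0]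
            nlinarith [abs_nonneg b]
          _ = 2 * κ := by ring
      rw [← sq_abs]
      have h2 := pow_le_pow_left₀ (abs_nonneg _) this 2
      linarith
    apply le_of_sq_aux (by linarith)
    rw [hn]
    rcases le_total (t * a) a' with hc | hc
    · have h1 : a' - t * a ≤ r' - 4 * h := by linarith
      have h2 : (t * a - a') ^ 2 ≤ (r' - 4 * h) ^ 2 := by
        have := pow_le_pow_left₀ (by linarith : 0 ≤ a' - t * a) h1 2
        linarith
      have h3 := mul_nonneg hh0 (by linarith : 0 ≤ 8 * r' - 16 * h - 4 * R₀)
      linarith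
    · have h1 : t * a - a' ≤ R₀ / 4 := by linarith
      have h2 := pow_le_pow_left₀ (by linarith : 0 ≤ t * a - a') h1 2
      have h3 := pow_le_pow_left₀ hR₀.le hr' 2
      have h4 := mul_le_mul_of_nonneg_left (by linarith : h ≤ R₀ / 20) hR₀.le
      linarith [sq_nonneg R₀]
  · rw [mem_closedBall, dist_eq_norm, add_sub_cancel_left, norm_smul,
      Real.norm_of_nonneg ht0.le, ← hWd, htW]

/-- Choice of a direction. -/
lemma exists_dir {M : ℕ} (hM : 0 < M) (w : EuclideanSpace ℝ (Fin 2)) :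
    ∃ j ∈ Finset.range (M + 1), ∃ ψ : ℝ, |ψ| ≤ 2 * Real.pi / M ∧
      perpC (-Real.pi + 2 * Real.pi / M * (j : ℝ)) w = ‖w‖ * Real.sin ψ ∧
      parC (-Real.pi + 2 * Real.pi / M * (j : ℝ)) w = ‖w‖ * Real.cos ψ := by
  set z : ℂ := ⟨w 0, w 1⟩ with hz
  have hnz : ‖z‖ = ‖w‖ := by
    have h1 : ‖z‖ ^ 2 = ‖w‖ ^ 2 := by
      rw [norm_sq_coord, ← Complex.normSq_eq_norm_sq, Complex.normSq_apply, hz]; ring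
    exact (sq_eq_sq₀ (norm_nonneg _) (norm_nonneg _)).1 h1
  have hc := Complex.norm_mul_cos_arg z
  have hsn := Complex.norm_mul_sin_arg z
  rw [hnz] at hc hsn
  have hc' : w 0 = ‖w‖ * Real.cos z.arg := hc.symm
  have hs' : w 1 = ‖w‖ * Real.sin z.arg := hsn.symm
  set φ := z.arg with hφ
  have hφ1 : -Real.pi < φ := Complex.neg_pi_lt_arg z
  have hφ2 : φ ≤ Real.pi := Complex.arg_le_pi z
  have hMr : (0 : ℝ) < M := by exact_mod_cast hM
  have hpi := Real.pi_pos
  set g := 2 * Real.pi / M with hg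
  have hg0 : 0 < g := by positivity
  have hgM : g * M = 2 * Real.pi := by rw [hg]; field_simp
  set v := (φ + Real.pi) / g with hv
  have hv0 : 0 ≤ v := div_nonneg (by linarith) hg0.le
  have hvg : v * g = φ + Real.pi := by rw [hv]; field_simp
  refine ⟨⌊v⌋₊, ?_, φ - (-Real.pi + g * (⌊v⌋₊ : ℝ)), ?_, ?_, ?_⟩
  · rw [Finset.mem_range, Nat.lt_succ_iff]
    apply Nat.floor_le_of_le
    by_contra hcon
    push Not at hcon
    nlinarith
  · have h1 := Nat.floor_le hv0
    have h2 := Nat.lt_floor_add_one v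
    rw [abs_le]; constructor <;> nlinarith
  · rw [Real.sin_sub, perpC, hc', hs']; ring
  · rw [Real.cos_sub, parC, hc', hs']; ring

lemma bad_subset {R₀ R₁ κ ε d α L : ℝ} {M : ℕ} (hM : 0 < M)
    (hR₀ : 0 < R₀) (hL : L = R₁ + 2 * R₀) (hR₀₁ : R₀ ≤ R₁)
    (hκ : κ = 2 * Real.pi * L / M) (hκL : κ ≤ L / 2)
    (hκ0 : 0 < κ)
    (hd : d * R₀ = 5 * κ ^ 2) (hd4 : d ≤ R₀ / 4)
    (hε : ε ≤ R₀ / 4)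
    (hα : ENNReal.ofReal α < volume (closedBall (0 : EuclideanSpace ℝ (Fin 2)) (d / 2)))
    (ω : Finset (EuclideanSpace ℝ (Fin 2) × ℝ)) (hω : ∀ p ∈ ω, p.2 ∈ Set.Icc R₀ R₁) :
    badSet R₀ ω α ε ⊆ ⋃ j ∈ Finset.range (M + 1),
      covA R₀ ω (-Real.pi + 2 * Real.pi / M * (j : ℝ)) κ ε d := by
  rintro x ⟨R, ⟨hR, hRε⟩, -, C, ⟨x₀, hx₀, hC⟩, hvol⟩
  have hx₀' := hx₀
  obtain ⟨hx₀1, hx₀2⟩ := hx₀'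
  simp only [surface, mem_iUnion, exists_prop] at hx₀1
  obtain ⟨p, hp, hx₀p⟩ := hx₀1
  obtain ⟨hr, hr1⟩ := hω p hp
  have hlens : ∀ q ∈ ω, closedBall q.1 q.2 ∩ closedBall x R ⊆ surface ω ∩ closedBall x R := by
    intro q hq
    apply inter_subset_inter_left
    exact subset_biUnion_of_mem (u := fun q : EuclideanSpace ℝ (Fin 2) × ℝ => closedBall q.1 q.2) hq
  have hpre : ∀ q : EuclideanSpace ℝ (Fin 2) × ℝ,
      IsPreconnected (closedBall q.1 q.2 ∩ closedBall x R) := fun q =>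
    ((convex_closedBall _ _).inter (convex_closedBall _ _)).isPreconnected
  have hpC : closedBall p.1 p.2 ∩ closedBall x R ⊆ C := by
    rw [hC]
    exact (hpre p).subset_connectedComponentIn ⟨hx₀p, hx₀2⟩ (hlens p hp)
  have hthin : ∀ q ∈ ω, closedBall q.1 q.2 ∩ closedBall x R ⊆ C →
      R + q.2 - d < ‖q.1 - x‖ := by
    intro q hq hqC
    by_contra hcon
    push Not at hcon
    have hq0 := (hω q hq).1
    have := lens_vol (x := x) (y := q.1) (R := R) (r := q.2) (ρ := d / 2) (by linarith)
      (by linarith) (by linarith)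
    exact absurd (this.trans ((measure_mono hqC).trans hvol)) (not_le.2 hα)
  have hW := hthin p hp hpC
  have hW2 : ‖p.1 - x‖ ≤ p.2 + R := by
    rw [← dist_eq_norm]
    have h1 := mem_closedBall.1 hx₀p
    have h2 := mem_closedBall.1 hx₀2
    rw [dist_comm] at h1
    linarith [dist_triangle p.1 x₀ x]
  obtain ⟨j, hj, ψ, hψ, hperp, hpar⟩ := exists_dir hM (p.1 - x)
  set θ := -Real.pi + 2 * Real.pi / M * (j : ℝ) with hθ
  have hL0 : 0 < L := by linarith
  have hκ' : 2 * Real.pi / M * L = κ := by rw [hκ]; ring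
  have hb : |perpC θ (p.1 - x)| ≤ κ := by
    rw [hperp, abs_mul, abs_norm]
    have h1 : |Real.sin ψ| ≤ |ψ| := Real.abs_sin_le_abs
    calc ‖p.1 - x‖ * |Real.sin ψ| ≤ L * (2 * Real.pi / M) :=
          mul_le_mul (by linarith) (h1.trans hψ) (abs_nonneg _) hL0.le
      _ = κ := by rw [← hκ']; ring
  have ha : 3 / 2 * R₀ ≤ parC θ (p.1 - x) := by
    have hψ2 : |ψ| ≤ 1 / 2 := by
      refine hψ.trans ?_
      by_contra hcon
      push Not at hcon
      nlinarith
    have h1 := Real.one_sub_sq_div_two_le_cos (x := ψ)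
    have h2 := pow_le_pow_left₀ (abs_nonneg ψ) hψ2 2
    rw [sq_abs] at h2
    rw [hpar]
    nlinarith
  simp only [mem_iUnion, exists_prop]
  refine ⟨j, hj, ⟨p, hp, by linarith, hb, ha⟩, ?_⟩
  intro q hq hqb hqa
  by_contra hcon
  push Not at hcon
  obtain ⟨hq0, hq1⟩ := hω q hq
  obtain ⟨c, hc1, hc2, hc3⟩ := common_point (R := R) (r := p.2) (r' := q.2) (x := x) (y := p.1)
    (y' := q.1) hR₀ hd hd4 hε hR hRε hr hq0 (by linarith) hW2 hb ha hqb hqa hcon.le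
  have hqC : closedBall q.1 q.2 ∩ closedBall x R ⊆ C := by
    have hu := IsPreconnected.union' ⟨c, mem_inter (mem_inter hc1 hc3) (mem_inter hc2 hc3)⟩ (hpre p) (hpre q)
    rw [hC]
    exact subset_union_right.trans (hu.subset_connectedComponentIn (Or.inl ⟨hx₀p, hx₀2⟩)
      (union_subset (hlens p hp) (hlens q hq)))
  have := hthin q hq hqC
  linarith

theorem stmt_9 (R₀ R₁ : ℝ) (hR₀ : 0 < R₀) (hR₀₁ : R₀ ≤ R₁)
    (Δ : Set (EuclideanSpace ℝ (Fin 2)))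
    (hΔb : Bornology.IsBounded Δ) (hΔm : MeasurableSet Δ)
    (δ : ℝ) (hδ : 0 < δ) :
    ∃ α > (0 : ℝ), ∃ ε > (0 : ℝ),
      ∀ ω : Finset (EuclideanSpace ℝ (Fin 2) × ℝ),
        (∀ p ∈ ω, p.2 ∈ Set.Icc R₀ R₁) → (∀ p ∈ ω, p.1 ∈ Δ) →
        volume (badSet R₀ ω α ε) ≤ ENNReal.ofReal δ := by
  obtain ⟨D, hD⟩ := hΔb.subset_closedBall (0 : EuclideanSpace ℝ (Fin 2))
  have hpi := Real.pi_pos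
  obtain ⟨L, hL⟩ : ∃ L, L = R₁ + 2 * R₀ := ⟨_, rfl⟩
  have hL0 : 0 < L := by linarith
  set V := (volume (closedBall (0 : EuclideanSpace ℝ (Fin 2)) (D + L + R₀))).toReal with hV
  have hV0 : 0 ≤ V := ENNReal.toReal_nonneg
  have hVe : volume (closedBall (0 : EuclideanSpace ℝ (Fin 2)) (D + L + R₀)) =
      ENNReal.ofReal V := by
    rw [hV, ENNReal.ofReal_toReal measure_closedBall_lt_top.ne]
  obtain ⟨Q, hQ⟩ := exists_nat_gt (8 * (1 + 6 / R₀) * Real.pi ^ 2 * L ^ 2 / R₀)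
  have hQ0 : (0 : ℝ) < Q := lt_trans (by positivity) hQ
  have hQn : 0 < Q := by exact_mod_cast hQ0
  have hQ1 : (1 : ℝ) ≤ Q := by exact_mod_cast hQn
  obtain ⟨c, hc⟩ : ∃ c, c = min (min (L / 2) (R₀ / 5)) (min 1 (R₀ / 4)) := ⟨_, rfl⟩
  have hc0 : 0 < c := by rw [hc]; positivity
  have hc1 : c ≤ L / 2 := hc ▸ (min_le_left _ _).trans (min_le_left _ _)
  have hc2 : c ≤ R₀ / 5 := hc ▸ (min_le_left _ _).trans (min_le_right _ _)
  have hc3 : c ≤ 1 := hc ▸ (min_le_right _ _).trans (min_le_left _ _)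
  have hc4 : c ≤ R₀ / 4 := hc ▸ (min_le_right _ _).trans (min_le_right _ _)
  obtain ⟨n, hn⟩ := exists_nat_gt (max (2 * Real.pi * L / c) (2 * V / δ))
  have hn1 : 2 * Real.pi * L / c < n := (le_max_left _ _).trans_lt hn
  have hn2 : 2 * V / δ < n := (le_max_right _ _).trans_lt hn
  have hn0 : (0 : ℝ) < n := lt_trans (by positivity) hn1
  have hnn : 0 < n := by exact_mod_cast hn0
  have hn1' : (1 : ℝ) ≤ n := by exact_mod_cast hnn
  obtain ⟨M, hM⟩ : ∃ M, M = Q * n := ⟨_, rfl⟩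
  have hMn : 0 < M := by rw [hM]; positivity
  have hM0 : (0 : ℝ) < M := by exact_mod_cast hMn
  have hMr : (M : ℝ) = Q * n := by rw [hM]; push_cast; ring
  obtain ⟨N, hN⟩ : ∃ N, N = Q * n ^ 2 := ⟨_, rfl⟩
  have hNn : 0 < N := by rw [hN]; positivity
  have hN0 : (0 : ℝ) < N := by exact_mod_cast hNn
  have hNr : (N : ℝ) = Q * n ^ 2 := by rw [hN]; push_cast; ring
  obtain ⟨κ, hκ⟩ : ∃ κ, κ = 2 * Real.pi * L / M := ⟨_, rfl⟩
  have hκ0 : 0 < κ := by rw [hκ]; positivity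
  have hκc : κ ≤ c := by
    rw [hκ, div_le_iff₀ hM0, hMr]
    rw [div_lt_iff₀ hc0] at hn1
    nlinarith [mul_pos hn0 hc0]
  have hκsq : κ ^ 2 ≤ c ^ 2 := pow_le_pow_left₀ hκ0.le hκc 2
  obtain ⟨d, hd⟩ : ∃ d, d = 5 * κ ^ 2 / R₀ := ⟨_, rfl⟩
  have hd0 : 0 < d := by rw [hd]; positivity
  have hdR : d * R₀ = 5 * κ ^ 2 := by rw [hd]; field_simp
  have hd4 : d ≤ R₀ / 4 := by
    rw [hd, div_le_iff₀ hR₀]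
    nlinarith
  have hε : κ ^ 2 ≤ R₀ / 4 := by nlinarith
  have hτ : κ ^ 2 + d + κ ^ 2 / (2 * R₀) < R₀ / (2 * N) := by
    have h1 : κ ^ 2 + d + κ ^ 2 / (2 * R₀) ≤ (1 + 6 / R₀) * κ ^ 2 := by
      rw [hd]
      have : (1 + 6 / R₀) * κ ^ 2 - (κ ^ 2 + 5 * κ ^ 2 / R₀ + κ ^ 2 / (2 * R₀))
          = κ ^ 2 / (2 * R₀) := by field_simp; ring
      have : 0 ≤ κ ^ 2 / (2 * R₀) := by positivity
      linarith
    refine h1.trans_lt ?_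
    rw [lt_div_iff₀ (by positivity), hκ, hNr, hMr]
    have h2 : (1 + 6 / R₀) * (2 * Real.pi * L / (Q * n)) ^ 2 * (2 * (Q * n ^ 2)) =
        8 * (1 + 6 / R₀) * Real.pi ^ 2 * L ^ 2 / Q := by
      field_simp; ring
    rw [h2, div_lt_iff₀ hQ0]
    rw [div_lt_iff₀ hR₀] at hQ
    linarith
  obtain ⟨β, hβ⟩ : ∃ β, β = (volume (closedBall (0 : EuclideanSpace ℝ (Fin 2)) (d / 2))).toReal :=
    ⟨_, rfl⟩
  have hβ0 : 0 < β := by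
    rw [hβ]
    exact ENNReal.toReal_pos (measure_closedBall_pos _ _ (by positivity)).ne'
      measure_closedBall_lt_top.ne
  have hβe : volume (closedBall (0 : EuclideanSpace ℝ (Fin 2)) (d / 2)) = ENNReal.ofReal β := by
    rw [hβ, ENNReal.ofReal_toReal measure_closedBall_lt_top.ne]
  refine ⟨β / 2, by positivity, κ ^ 2, by positivity, ?_⟩
  intro ω hω hωΔ
  have hsub := bad_subset hMn hR₀ hL hR₀₁ hκ (hκc.trans hc1) hκ0 hdR hd4 hε
    (α := β / 2) (by rw [hβe]; exact (ENNReal.ofReal_lt_ofReal_iff hβ0).2 (by linarith)) ω hω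
  have hA : ∀ θ, volume (covA R₀ ω θ κ (κ ^ 2) d) ≤ ENNReal.ofReal (V / N) := by
    intro θ
    have h1 : covA R₀ ω θ κ (κ ^ 2) d ⊆ closedBall 0 (D + L) := by
      rintro x ⟨⟨p, hp, h1, -, -⟩, -⟩
      have h2 := hD (hωΔ p hp)
      rw [mem_closedBall, dist_zero_right] at h2 ⊢
      have h3 := (hω p hp).2
      have h4 : ‖x‖ ≤ ‖p.1‖ + ‖p.1 - x‖ := by
        have := norm_sub_le p.1 (p.1 - x)
        rwa [sub_sub_cancel] at this
      linarith
    have h2 := vol_covA hR₀ (θ := θ) hNn hτ h1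
    rw [hVe] at h2
    rw [ENNReal.ofReal_div_of_pos hN0, ENNReal.ofReal_natCast,
      ENNReal.le_div_iff_mul_le (Or.inl (by exact_mod_cast hNn.ne'))
        (Or.inl (ENNReal.natCast_ne_top _)), mul_comm]
    exact h2
  calc volume (badSet R₀ ω (β / 2) (κ ^ 2)) ≤ _ := measure_mono hsub
    _ ≤ ∑ j ∈ Finset.range (M + 1), _ := measure_biUnion_finset_le _ _
    _ ≤ ∑ j ∈ Finset.range (M + 1), ENNReal.ofReal (V / N) := Finset.sum_le_sum fun j _ => hA _
    _ = ENNReal.ofReal ((M + 1 : ℕ) * (V / N)) := by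
      rw [Finset.sum_const, Finset.card_range, nsmul_eq_mul,
        ENNReal.ofReal_mul (by positivity), ENNReal.ofReal_natCast]
    _ ≤ ENNReal.ofReal δ := by
      apply ENNReal.ofReal_le_ofReal
      push_cast
      rw [← mul_div_assoc, div_le_iff₀ hN0, hMr, hNr]
      rw [div_lt_iff₀ hδ] at hn2
      have hQn1 : (1 : ℝ) ≤ Q * n := one_le_mul_of_one_le_of_one_le hQ1 hn1'
      calc ((Q : ℝ) * n + 1) * V ≤ (Q * n) * (2 * V) := by nlinarith
        _ ≤ (Q * n) * (n * δ) := by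
          apply mul_le_mul_of_nonneg_left hn2.le; positivity
        _ = δ * (Q * n ^ 2) := by ring
end
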